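/- Let 0 < a < b and let k ≥ 1 be an integer. Then there exist a function u : [a,b] → ℝ, twice continuously differentiable, with u(a) = u(b) = 0 and −𝓕(r, u''(r), u'(r)/r) = |u(r)|^{p−1}u(r) for all r ∈ (a,b), and a finite sequence a = r₀ < r₁ < … < r_k = b such that (−1)^{j−1} u(r) > 0 for all r ∈ (r_{j−1}, r_j) and all j = 1,…,k; moreover there also exists such a solution with the opposite sign pattern, i.e. (−1)^{j} u(r) > 0 on (r_{j−1}, r_j) for j = 1,…,k. (These are radial solutions of −F(x,D²u) = |u|^{p−1}u in the annulus A_{a,b} with exactly k nodal regions.) -/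

import Mathlib

open Real Set

/-- Uniform ellipticity of the radial form `𝓕(r, m, l)` of a uniformly elliptic operator. -/
def UnifElliptic (n : ℕ) (lam Lam : ℝ) (F : ℝ → ℝ → ℝ → ℝ) : Prop :=
  ∀ r : ℝ, 0 < r → ∀ m l s t : ℝ, 0 ≤ s → 0 ≤ t →
    lam * (s + ((n : ℝ) - 1) * t) ≤ F r (m + s) (l + t) - F r m l ∧
      F r (m + s) (l + t) - F r m l ≤ Lam * (s + ((n : ℝ) - 1) * t)

open Filter Topology

/-!
With `f(u) = |u|^{p-1} u`, ellipticity turns the radial equation into a damped oscillator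
`u'' = -c u' - σ u` with bounded damping `c` and stiffness `σ` comparable to `f(u) / u`, which is
small near `u = 0` and large for large `|u|`. In Prüfer coordinates `u = e^w sin θ`,
`u' = e^w cos θ` the zeros of `u` are the times at which `θ` crosses a multiple of `π`, which it
does only upwards, so it suffices to shoot from `u(a) = 0` until `θ(b) = kπ`.

A small initial slope keeps `u` in the region of small stiffness, where `θ(b) ≤ π`. A large one
makes each half-turn of `θ` take time at most `(b - a) / k` while the slope at the next zero is
still large, so that `θ(b) ≥ kπ`. The intermediate value theorem, applied to the initial slope,
gives `θ(b) = kπ`. Since a solution with bounded initial slope has bounded amplitude as long as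
`θ ≤ kπ`, the stiffness may be frozen beyond that amplitude beforehand, which makes the flow
globally Lipschitz. The opposite sign pattern comes from the reflected equation for `-u`.
-/

/-! ### One-sided differential inequalities -/

theorem le_barrier {y B y' B' : ℝ → ℝ} {s t : ℝ} (hy : ∀ x ∈ Icc s t, HasDerivAt y (y' x) x)
    (hB : ∀ x ∈ Icc s t, HasDerivAt B (B' x) x) (hs : y s ≤ B s)
    (h : ∀ x ∈ Icc s t, B x < y x → y' x ≤ B' x) : ∀ x ∈ Icc s t, y x ≤ B x := by
  intro x hx
  -- The barrier `B + δ (1 + (z - s))` is strict, and `δ → 0`.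
  have strict (δ : ℝ) (hδ : 0 < δ) : y x ≤ B x + δ * (1 + (x - s)) := by
    have hBδ (z) (hz : z ∈ Icc s t) :
        HasDerivAt (fun z => B z + δ * (1 + (z - s))) (B' z + δ * 1) z :=
      (hB z hz).add ((((hasDerivAt_id z).sub_const s).const_add 1).const_mul δ)
    refine image_le_of_deriv_right_lt_deriv_boundary'
      (fun z hz => (hy z hz).continuousAt.continuousWithinAt)
      (fun z hz => (hy z (Ico_subset_Icc_self hz)).hasDerivWithinAt) (by simp; linarith)
      (fun z hz => (hBδ z hz).continuousAt.continuousWithinAt)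
      (fun z hz => (hBδ z (Ico_subset_Icc_self hz)).hasDerivWithinAt) (fun z hz hyz => ?_) hx
    have : 0 < δ * (1 + (z - s)) := mul_pos hδ (by linarith [hz.1])
    linarith [h z (Ico_subset_Icc_self hz) (by linarith)]
  have hpos : 0 < 1 + (x - s) := by linarith [hx.1]
  refine le_of_forall_pos_le_add fun ε hε => ?_
  simpa [hpos.ne'] using strict (ε / (1 + (x - s))) (by positivity)

theorem le_add_mul_of_hasDerivAt_le {y y' : ℝ → ℝ} {s t K : ℝ}
    (hy : ∀ x ∈ Icc s t, HasDerivAt y (y' x) x) (hK : ∀ x ∈ Icc s t, y' x ≤ K) :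
    ∀ x ∈ Icc s t, y x ≤ y s + K * (x - s) :=
  le_barrier (B' := fun _ => K) hy
    (fun x _ => by simpa using (((hasDerivAt_id x).sub_const s).const_mul K).const_add (y s))
    (by simp) fun x hx _ => hK x hx

theorem hasDerivAt_exp_neg_mul_sub_mul (C s A x : ℝ) :
    HasDerivAt (fun x => exp (-(C * (x - s))) * A) (-C * (exp (-(C * (x - s))) * A)) x := by
  have h : HasDerivAt (fun x => -(C * (x - s))) (-(C * 1)) x :=
    (((hasDerivAt_id x).sub_const s).const_mul C).neg
  exact (h.exp.mul_const A).congr_deriv (by ring)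

/-! ### Nonnegative arcs of a damped oscillator -/

/-- `U ≥ 0` solves the damped linear equation `U'' = -c U' - σ U` on `[s, t]`, with `V = U'`,
variable damping `c ∈ [0, C]` and variable stiffness `σ ≥ 0`. A nonlinear equation
`U'' = -c U' - f(U)` is of this form with `σ = f(U) / U`. -/
structure IsArc (C : ℝ) (c σ U V : ℝ → ℝ) (s t : ℝ) : Prop where
  damping : ∀ x ∈ Icc s t, c x ∈ Icc 0 C
  stiffness_nonneg : ∀ x ∈ Icc s t, 0 ≤ σ x
  nonneg : ∀ x ∈ Icc s t, 0 ≤ U x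
  hasDerivAt : ∀ x ∈ Icc s t, HasDerivAt U (V x) x
  hasDerivAt_slope : ∀ x ∈ Icc s t, HasDerivAt V (-(c x * V x) - σ x * U x) x

/-- The bounds on the stiffness `σ = f(u) / u` at displacement `u` that the shooting argument
needs: `ψ` controls it from above near `0` and on bounded sets, and it is at least `P` away from
`(-m, m)`. -/
structure IsStiffness (ψ : ℝ → ℝ) (P m u σ : ℝ) : Prop where
  nonneg : 0 ≤ σ
  le : ∀ M, |u| ≤ M → σ ≤ ψ M
  ge : m ≤ |u| → P ≤ σ

theorem IsStiffness.of_abs_eq {ψ : ℝ → ℝ} {P m u u' σ : ℝ} (h : IsStiffness ψ P m u σ)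
    (hu : |u'| = |u|) : IsStiffness ψ P m u' σ :=
  ⟨h.nonneg, hu ▸ h.le, hu ▸ h.ge⟩

namespace IsArc

variable {C s t T : ℝ} {c σ U V : ℝ → ℝ}

theorem mono (h : IsArc C c σ U V s t) {s' t' : ℝ} (hs : s ≤ s') (ht : t' ≤ t) :
    IsArc C c σ U V s' t' :=
  have hsub : Icc s' t' ⊆ Icc s t := Icc_subset_Icc hs ht
  ⟨fun x hx => h.damping x (hsub hx), fun x hx => h.stiffness_nonneg x (hsub hx),
    fun x hx => h.nonneg x (hsub hx), fun x hx => h.hasDerivAt x (hsub hx),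
    fun x hx => h.hasDerivAt_slope x (hsub hx)⟩

theorem slope_le (h : IsArc C c σ U V s t) {α : ℝ} (hα : 0 ≤ α) (hV : V s ≤ α) :
    ∀ x ∈ Icc s t, V x ≤ α := by
  refine le_barrier h.hasDerivAt_slope (fun x _ => hasDerivAt_const x α) hV fun x hx hlt => ?_
  have hdamp := mul_nonneg (h.damping x hx).1 (hα.trans hlt.le)
  have hspring := mul_nonneg (h.stiffness_nonneg x hx) (h.nonneg x hx)
  linarith

theorem le_mul (h : IsArc C c σ U V s t) {α : ℝ} (hα : 0 ≤ α) (hV : V s ≤ α) (hU : U s = 0) :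
    ∀ x ∈ Icc s t, U x ≤ α * (x - s) := by
  simpa [hU] using le_add_mul_of_hasDerivAt_le h.hasDerivAt (h.slope_le hα hV)

theorem neg_slope_le (h : IsArc C c σ U V s t) {Q : ℝ} (hQ : ∀ x ∈ Icc s t, σ x * U x ≤ Q)
    (hV : 0 ≤ V s) : ∀ x ∈ Icc s t, -V x ≤ Q * (x - s) := by
  refine le_barrier (B' := fun _ => Q) (fun x hx => (h.hasDerivAt_slope x hx).neg)
    (fun x _ => by simpa using ((hasDerivAt_id x).sub_const s).const_mul Q) (by simpa using hV)
    fun x hx hlt => ?_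
  have hspring := mul_nonneg (h.stiffness_nonneg x hx) (h.nonneg x hx)
  have hV0 : V x ≤ 0 := by nlinarith [hQ x hx, hx.1]
  have hdamp := mul_nonpos_of_nonneg_of_nonpos (h.damping x hx).1 hV0
  linarith [hQ x hx]

theorem le_slope (h : IsArc C c σ U V s t) {Q S : ℝ} (hQ : ∀ x ∈ Icc s t, σ x * U x ≤ Q)
    (hT : t - s ≤ T) (hS : 0 ≤ S) (hV : exp (C * T) * (S + Q * T) ≤ V s) :
    ∀ x ∈ Icc s t, S ≤ V x := by
  intro x hx
  have hs : s ∈ Icc s t := ⟨le_rfl, hx.1.trans hx.2⟩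
  have hC : 0 ≤ C := (h.damping s hs).1.trans (h.damping s hs).2
  have hQ0 : 0 ≤ Q := (mul_nonneg (h.stiffness_nonneg s hs) (h.nonneg s hs)).trans (hQ s hs)
  have hT0 : 0 ≤ T := by linarith [hs.2]
  have hV0 : 0 ≤ V s := le_trans (by positivity) hV
  have barrier : exp (-(C * (x - s))) * V s - Q * (x - s) ≤ V x := by
    have := le_barrier (B' := fun x => -(-C * (exp (-(C * (x - s))) * V s) - Q * 1))
      (fun x hx => (h.hasDerivAt_slope x hx).neg)
      (fun x _ => ((hasDerivAt_exp_neg_mul_sub_mul C s (V s) x).sub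
        (((hasDerivAt_id x).sub_const s).const_mul Q)).neg) (by simp) (fun z hz hlt => ?_) x hx
    · exact neg_le_neg_iff.1 this
    simp only [Pi.neg_apply, Pi.sub_apply, id, neg_lt_neg_iff] at hlt
    have hVz : V z ≤ exp (-(C * (z - s))) * V s := by nlinarith [hz.1]
    have hdamp : c z * V z ≤ C * (exp (-(C * (z - s))) * V s) :=
      (mul_le_mul_of_nonneg_left hVz (h.damping z hz).1).trans
        (mul_le_mul_of_nonneg_right (h.damping z hz).2 (by positivity))
    linarith [hQ z hz]
  have hdecay : S + Q * T ≤ exp (-(C * (x - s))) * V s := by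
    calc S + Q * T = exp (-(C * T)) * (exp (C * T) * (S + Q * T)) := by
          rw [← mul_assoc, ← exp_add]; simp
      _ ≤ exp (-(C * (x - s))) * V s := by
          gcongr
          linarith [hx.2]
  nlinarith [hx.2]

theorem slope_le_neg (h : IsArc C c σ U V s t) (hT : t - s ≤ T) {D : ℝ} (hD : 0 ≤ D)
    (hV : V s ≤ -(exp (C * T) * D)) : ∀ x ∈ Icc s t, V x ≤ -D := by
  intro x hx
  have hs : s ∈ Icc s t := ⟨le_rfl, hx.1.trans hx.2⟩
  have hC : 0 ≤ C := (h.damping s hs).1.trans (h.damping s hs).2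
  have hV0 : V s ≤ 0 := hV.trans (neg_nonpos.2 (by positivity))
  have barrier : V x ≤ exp (-(C * (x - s))) * V s := by
    refine le_barrier h.hasDerivAt_slope
      (fun x _ => hasDerivAt_exp_neg_mul_sub_mul C s (V s) x) (by simp) (fun z hz hlt => ?_) x hx
    have hdamp : c z * -V z ≤ C * -(exp (-(C * (z - s))) * V s) :=
      (mul_le_mul_of_nonneg_left (neg_le_neg hlt.le) (h.damping z hz).1).trans
        (mul_le_mul_of_nonneg_right (h.damping z hz).2
          (neg_nonneg.2 (mul_nonpos_of_nonneg_of_nonpos (exp_pos _).le hV0)))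
    linarith [mul_nonneg (h.stiffness_nonneg z hz) (h.nonneg z hz)]
  have hdecay : D ≤ exp (-(C * (x - s))) * -V s := by
    calc D = exp (-(C * T)) * (exp (C * T) * D) := by rw [← mul_assoc, ← exp_add]; simp
      _ ≤ exp (-(C * (x - s))) * -V s := by
          gcongr
          · linarith [hx.2]
          · linarith
  linarith

theorem slope_le_neg_of_drop (h : IsArc C c σ U V s t) (hT : t - s ≤ T) {D x y : ℝ} (hD : 0 ≤ D)
    (hx : s ≤ x) (hxy : x < y) (hdrop : exp (C * T) * D * (y - x) ≤ U x - U y) :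
    ∀ z ∈ Icc y t, V z ≤ -D := by
  intro z hz
  have hmem : ∀ ξ ∈ Icc x y, ξ ∈ Icc s t :=
    fun ξ hξ => ⟨hx.trans hξ.1, hξ.2.trans (hz.1.trans hz.2)⟩
  obtain ⟨ξ, hξ, hVξ⟩ := exists_hasDerivAt_eq_slope U V hxy
    (fun w hw => (h.hasDerivAt w (hmem w hw)).continuousAt.continuousWithinAt)
    fun w hw => h.hasDerivAt w (hmem w (Ioo_subset_Icc_self hw))
  have hsteep : V ξ ≤ -(exp (C * T) * D) := by
    rw [hVξ, div_le_iff₀ (sub_pos.2 hxy)]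
    linarith
  have hsξ : s ≤ ξ := (hmem ξ (Ioo_subset_Icc_self hξ)).1
  exact (h.mono hsξ le_rfl).slope_le_neg (by linarith) hD hsteep z ⟨hξ.2.le.trans hz.1, hz.2⟩

-- The Riccati variable `q = V / U` satisfies `q' ≤ -(κ² + q²) / 2`, so `arctan (q / κ)` loses
-- `κ / 2` per unit of time while staying in `(-π / 2, π / 2)`.
theorem length_lt_of_stiff (h : IsArc C c σ U V s t) {P κ : ℝ} (hκ : 0 < κ)
    (hP : C ^ 2 + κ ^ 2 ≤ 2 * P) (hU : ∀ x ∈ Icc s t, 0 < U x) (hσ : ∀ x ∈ Icc s t, P ≤ σ x)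
    (hst : s ≤ t) : κ * (t - s) < 2 * π := by
  have riccati : ∀ x ∈ Icc s t,
      HasDerivAt (fun x => V x / U x) (-(c x * (V x / U x)) - σ x - (V x / U x) ^ 2) x :=
    fun x hx => ((h.hasDerivAt_slope x hx).div (h.hasDerivAt x hx) (hU x hx).ne').congr_deriv (by
      have := (hU x hx).ne'
      field_simp)
  have key := le_add_mul_of_hasDerivAt_le (K := -(κ / 2))
    (fun x hx => ((riccati x hx).div_const κ).arctan) (fun x hx => ?_) t ⟨hst, le_rfl⟩
  · linarith [neg_pi_div_two_lt_arctan (V t / U t / κ), arctan_lt_pi_div_two (V s / U s / κ)]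
  set q := V x / U x
  have hq : -(c x * q) - σ x - q ^ 2 ≤ -((κ ^ 2 + q ^ 2) / 2) := by
    obtain ⟨hc0, hcC⟩ := h.damping x hx
    nlinarith [sq_nonneg (c x + q), hσ x hx]
  rw [one_div, inv_mul_le_iff₀ (by positivity), div_le_iff₀ hκ]
  calc _ ≤ _ := hq
    _ = _ := by field_simp

theorem exists_height_le (h : IsArc C c σ U V s t) (hst : s < t) (hT : t - s ≤ T) (hU : U s = 0)
    {η M B : ℝ} (hη : 0 < η) (hM : 0 < M) (hvanish : t < s + η → U t = 0)
    (hσ : ∀ x ∈ Icc s t, U x ≤ M → σ x ≤ B)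
    (hV : exp (C * T) * (M / η + B * M * T) ≤ V s) :
    ∃ x ∈ Icc s t, x ≤ s + η ∧ M ≤ U x := by
  by_contra! hlow
  set t' := min t (s + η)
  have ht' : t' ∈ Icc s t := ⟨le_min hst.le (by linarith), min_le_left _ _⟩
  have h' := h.mono le_rfl ht'.2
  have hmem : ∀ x ∈ Icc s t', x ∈ Icc s t := fun x hx => ⟨hx.1, hx.2.trans ht'.2⟩
  have hUM : ∀ x ∈ Icc s t', U x ≤ M := fun x hx =>
    (hlow x (hmem x hx) (hx.2.trans (min_le_right _ _))).le
  have hspring : ∀ x ∈ Icc s t', σ x * U x ≤ B * M := fun x hx => by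
    have hσB := hσ x (hmem x hx) (hUM x hx)
    exact mul_le_mul hσB (hUM x hx) (h'.nonneg x hx) ((h'.stiffness_nonneg x hx).trans hσB)
  have hslope := h'.le_slope hspring (by linarith [ht'.2]) (by positivity) hV
  have hgrow := le_add_mul_of_hasDerivAt_le (fun x hx => (h'.hasDerivAt x hx).neg)
    (fun x hx => neg_le_neg (hslope x hx)) t' ⟨ht'.1, le_rfl⟩
  simp only [Pi.neg_apply, hU] at hgrow
  rcases lt_or_ge t (s + η) with hlt | hge
  · have : t' = t := min_eq_left hlt.le
    have hpos : 0 < M / η * (t - s) := mul_pos (by positivity) (sub_pos.2 hst)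
    rw [this, hvanish hlt] at hgrow
    linarith
  · have : t' = s + η := min_eq_right hge
    have hcancel : M / η * (t' - s) = M := by rw [this]; field_simp; ring
    linarith [hlow t' ht' this.le]

theorem length_lt_of_height (h : IsArc C c σ U V s t) (hT : t - s ≤ T) {η m P : ℝ} (hη : 0 < η)
    (hm : 0 < m) (hP : C ^ 2 + (2 * π / η) ^ 2 ≤ 2 * P) (hσ : ∀ x ∈ Icc s t, m ≤ U x → P ≤ σ x)
    (hU : (1 + exp (C * T)) * m ≤ U s) : t < s + 2 * η := by
  by_contra! hlong
  obtain ⟨x, hx, hxm⟩ : ∃ x ∈ Icc s (s + η), U x < m := by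
    by_contra! hhigh
    have := (h.mono (t' := s + η) le_rfl (by linarith)).length_lt_of_stiff (by positivity) hP
      (fun x hx => hm.trans_le (hhigh x hx))
      (fun x hx => hσ x ⟨hx.1, by linarith [hx.2]⟩ (hhigh x hx)) (by linarith)
    have hcancel : 2 * π / η * (s + η - s) = 2 * π := by field_simp; ring
    linarith
  have hsx : s < x := hx.1.lt_of_ne (by
    rintro rfl
    nlinarith [exp_pos (C * T)])
  have hfall : ∀ z ∈ Icc x t, V z ≤ -(m / η) := by
    refine h.slope_le_neg_of_drop hT (by positivity) le_rfl hsx ?_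
    have : m / η * (x - s) ≤ m := by
      rw [div_mul_eq_mul_div, div_le_iff₀ hη]
      nlinarith [hx.2]
    nlinarith [exp_pos (C * T)]
  have hxη : x + η ≤ t := by linarith [hx.2]
  have hend := le_add_mul_of_hasDerivAt_le
    (fun z hz => h.hasDerivAt z ⟨hsx.le.trans hz.1, hz.2⟩) hfall (x + η) ⟨by linarith, hxη⟩
  have hcancel : -(m / η) * (x + η - x) = -m := by field_simp; ring
  linarith [h.nonneg (x + η) ⟨by linarith, hxη⟩]

theorem exists_steep_start {ψ : ℝ → ℝ} {η m P : ℝ} (hη : 0 < η) (hm : 0 < m)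
    (hP : C ^ 2 + (2 * π / η) ^ 2 ≤ 2 * P) (T S : ℝ) :
    ∃ A, ∀ (c σ U V : ℝ → ℝ) (s t : ℝ), IsArc C c σ U V s t →
      (∀ x ∈ Icc s t, IsStiffness ψ P m (U x) (σ x)) → U s = 0 → A ≤ V s → s < t → t - s ≤ T →
      t < s + 3 * η ∧ (U t = 0 → V t ≤ -S) := by
  set E := exp (C * T)
  have : 0 < E := exp_pos _
  set M := max ((1 + E) * m) (E * |S| * (3 * η))
  have hM : 0 < M := lt_max_of_lt_left (by positivity)
  refine ⟨E * (M / η + ψ M * M * T), fun c σ U V s t h hσ hU hV hst hT => ?_⟩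
  have reach (hvanish : t < s + η → U t = 0) : ∃ x ∈ Icc s t, x ≤ s + η ∧ M ≤ U x :=
    h.exists_height_le hst hT hU hη hM hvanish
      (fun x hx hxM => (hσ x hx).le M (by rwa [abs_of_nonneg (h.nonneg x hx)])) hV
  have hlt : t < s + 3 * η := by
    by_contra! hlong
    obtain ⟨x, hx, hxη, hMx⟩ := reach fun hshort => by linarith
    have := (h.mono hx.1 le_rfl).length_lt_of_height (by linarith [hx.1]) hη hm hP
      (fun z hz hmz => (hσ z ⟨hx.1.trans hz.1, hz.2⟩).ge (hmz.trans (le_abs_self _)))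
      ((le_max_left _ _).trans hMx)
    linarith
  refine ⟨hlt, fun hUt => ?_⟩
  obtain ⟨x, hx, -, hMx⟩ := reach fun _ => hUt
  have hxt : x < t := hx.2.lt_of_ne (by
    rintro rfl
    linarith)
  have hdrop : E * |S| * (t - x) ≤ U x - U t := by
    calc E * |S| * (t - x) ≤ E * |S| * (3 * η) := by gcongr; linarith [hx.1]
      _ ≤ U x - U t := by linarith [le_max_right ((1 + E) * m) (E * |S| * (3 * η))]
  linarith [h.slope_le_neg_of_drop hT (abs_nonneg S) hx.1 hxt hdrop t ⟨le_rfl, le_rfl⟩,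
    le_abs_self S]

end IsArc

/-! ### Prüfer coordinates -/

/-- The displacement `u = e ^ w sin θ` with log-amplitude `w` and angle `θ`. -/
noncomputable def displacement (w θ : ℝ → ℝ) (x : ℝ) : ℝ := exp (w x) * sin (θ x)

/-- The velocity `u' = e ^ w cos θ` with log-amplitude `w` and angle `θ`. -/
noncomputable def velocity (w θ : ℝ → ℝ) (x : ℝ) : ℝ := exp (w x) * cos (θ x)

theorem displacement_sub_nat_mul_pi (w θ : ℝ → ℝ) (j : ℕ) (x : ℝ) :
    displacement w (fun x => θ x - j * π) x = (-1) ^ j * displacement w θ x := by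
  rw [displacement, sin_sub_nat_mul_pi, mul_left_comm, displacement]

theorem abs_displacement_le (w θ : ℝ → ℝ) (x : ℝ) : |displacement w θ x| ≤ exp (w x) := by
  rw [displacement, abs_mul, abs_exp]
  exact mul_le_of_le_one_right (exp_pos _).le (abs_sin_le_one _)

theorem exp_le_abs_displacement_add_abs_velocity (w θ : ℝ → ℝ) (x : ℝ) :
    exp (w x) ≤ |displacement w θ x| + |velocity w θ x| := by
  have hone : 1 ≤ |sin (θ x)| + |cos (θ x)| := by
    nlinarith [sin_sq_add_cos_sq (θ x), sq_abs (sin (θ x)), sq_abs (cos (θ x)),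
      abs_sin_le_one (θ x), abs_cos_le_one (θ x), abs_nonneg (sin (θ x)), abs_nonneg (cos (θ x))]
  rw [displacement, velocity, abs_mul, abs_mul, abs_exp, ← mul_add]
  exact le_mul_of_one_le_right (exp_pos _).le hone

/-- The damped linear equation `u'' = -c u' - σ u` on `[a, b]`, with variable damping
`c ∈ [0, C]` and variable stiffness `σ ≥ 0`, written in the Prüfer coordinates
`u = e ^ w sin θ`, `u' = e ^ w cos θ`. -/
structure IsPruferSol (C : ℝ) (c σ w θ : ℝ → ℝ) (a b : ℝ) : Prop where
  damping : ∀ x ∈ Icc a b, c x ∈ Icc 0 C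
  stiffness_nonneg : ∀ x ∈ Icc a b, 0 ≤ σ x
  hasDerivAt_logAmplitude : ∀ x ∈ Icc a b,
    HasDerivAt w ((1 - σ x) * (sin (θ x) * cos (θ x)) - c x * cos (θ x) ^ 2) x
  hasDerivAt_angle : ∀ x ∈ Icc a b,
    HasDerivAt θ (cos (θ x) ^ 2 + c x * (sin (θ x) * cos (θ x)) + σ x * sin (θ x) ^ 2) x

/-- A sign-changing profile: `u` vanishes at `a = rr 0 < rr 1 < ⋯ < rr k = b` and alternates in
sign in between, starting with a positive nodal region. -/
structure HasNodes (u : ℝ → ℝ) (a b : ℝ) (k : ℕ) (rr : ℕ → ℝ) : Prop where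
  left : rr 0 = a
  right : rr k = b
  lt : ∀ j < k, rr j < rr (j + 1)
  zero : ∀ j ≤ k, u (rr j) = 0
  sign : ∀ j < k, ∀ x ∈ Ioo (rr j) (rr (j + 1)), 0 < (-1) ^ j * u x

namespace IsPruferSol

variable {C a b s t : ℝ} {c σ w θ : ℝ → ℝ}

theorem mono (h : IsPruferSol C c σ w θ a b) (hs : a ≤ s) (ht : t ≤ b) :
    IsPruferSol C c σ w θ s t :=
  have hsub : Icc s t ⊆ Icc a b := Icc_subset_Icc hs ht
  ⟨fun x hx => h.damping x (hsub hx), fun x hx => h.stiffness_nonneg x (hsub hx),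
    fun x hx => h.hasDerivAt_logAmplitude x (hsub hx), fun x hx => h.hasDerivAt_angle x (hsub hx)⟩

theorem sub_nat_mul_pi (h : IsPruferSol C c σ w θ a b) (j : ℕ) :
    IsPruferSol C c σ w (fun x => θ x - j * π) a b := by
  have hsign : ((-1 : ℝ) ^ j) ^ 2 = 1 := by rw [← pow_mul, mul_comm, pow_mul]; simp
  refine ⟨h.damping, h.stiffness_nonneg, fun x hx => ?_, fun x hx => ?_⟩ <;>
    simp only [sin_sub_nat_mul_pi, cos_sub_nat_mul_pi]
  · refine (h.hasDerivAt_logAmplitude x hx).congr_deriv ?_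
    linear_combination
      -((1 - σ x) * (sin (θ x) * cos (θ x)) - c x * cos (θ x) ^ 2) * hsign
  · refine ((h.hasDerivAt_angle x hx).sub_const _).congr_deriv ?_
    linear_combination
      -(cos (θ x) ^ 2 + c x * (sin (θ x) * cos (θ x)) + σ x * sin (θ x) ^ 2) * hsign

theorem hasDerivAt_displacement (h : IsPruferSol C c σ w θ a b) {x : ℝ} (hx : x ∈ Icc a b) :
    HasDerivAt (displacement w θ) (velocity w θ x) x :=
  ((h.hasDerivAt_logAmplitude x hx).exp.mul (h.hasDerivAt_angle x hx).sin).congr_deriv (by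
    rw [velocity]
    linear_combination exp (w x) * cos (θ x) * sin_sq_add_cos_sq (θ x))

theorem hasDerivAt_velocity (h : IsPruferSol C c σ w θ a b) {x : ℝ} (hx : x ∈ Icc a b) :
    HasDerivAt (velocity w θ) (-(c x * velocity w θ x) - σ x * displacement w θ x) x :=
  ((h.hasDerivAt_logAmplitude x hx).exp.mul (h.hasDerivAt_angle x hx).cos).congr_deriv (by
    rw [velocity, displacement]
    linear_combination
      -(exp (w x) * (c x * cos (θ x) + σ x * sin (θ x))) * sin_sq_add_cos_sq (θ x))

theorem continuousOn_angle (h : IsPruferSol C c σ w θ a b) : ContinuousOn θ (Icc a b) :=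
  fun x hx => (h.hasDerivAt_angle x hx).continuousAt.continuousWithinAt

-- `θ' = 1` wherever `sin θ = 0`, so the angle crosses the multiples of `π` only upwards.
theorem angle_pos (h : IsPruferSol C c σ w θ s t) (hst : s < t) (hs : 0 ≤ θ s) : 0 < θ t := by
  have hge : ∀ z ∈ Icc s t, -θ z ≤ 0 := by
    refine image_le_of_deriv_right_lt_deriv_boundary h.continuousOn_angle.neg
      (fun z hz => (h.hasDerivAt_angle z (Ico_subset_Icc_self hz)).neg.hasDerivWithinAt)
      (neg_nonpos.2 hs) (fun z => hasDerivAt_const z 0) fun z _ hz0 => ?_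
    simp [neg_eq_zero.1 hz0]
  refine (neg_nonpos.1 (hge t ⟨hst.le, le_rfl⟩)).lt_of_ne' fun hθt => ?_
  have hd : HasDerivAt θ 1 t := by simpa [hθt] using h.hasDerivAt_angle t ⟨hst.le, le_rfl⟩
  have hsign := eventually_nhdsWithin_sign_eq_of_deriv_pos (hd.deriv ▸ one_pos) hθt
  obtain ⟨z, hz, hsz⟩ := ((hsign.filter_mono nhdsWithin_le_nhds).and (Ioo_mem_nhdsLT hst)).exists
  rw [sign_neg (sub_neg.2 hsz.2), sign_eq_neg_one_iff] at hz
  linarith [hge z ⟨hsz.1.le, hsz.2.le⟩]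

theorem nat_mul_pi_lt_angle (h : IsPruferSol C c σ w θ s t) (hst : s < t) {j : ℕ}
    (hs : j * π ≤ θ s) : j * π < θ t :=
  sub_pos.1 ((h.sub_nat_mul_pi j).angle_pos hst (sub_nonneg.2 hs))

theorem nat_mul_pi_le_angle (h : IsPruferSol C c σ w θ s t) (hst : s ≤ t) {j : ℕ}
    (hs : j * π ≤ θ s) : j * π ≤ θ t := by
  rcases hst.eq_or_lt with rfl | hlt
  · exact hs
  · exact (h.nat_mul_pi_lt_angle hlt hs).le

theorem angle_le_of_angle_right_eq (h : IsPruferSol C c σ w θ a b) {k : ℕ} (hb : θ b = k * π) :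
    ∀ x ∈ Icc a b, θ x ≤ k * π := fun x hx => by
  by_contra! hgt
  have hlt : x < b := hx.2.lt_of_ne fun h => hgt.ne' (h ▸ hb)
  exact ((h.mono hx.1 le_rfl).nat_mul_pi_lt_angle hlt hgt.le).ne' hb

theorem exists_angle_eq (h : IsPruferSol C c σ w θ s t) (hst : s ≤ t) {φ : ℝ} (hs : θ s ≤ φ)
    (ht : φ ≤ θ t) : ∃ x ∈ Icc s t, θ x = φ :=
  intermediate_value_Icc hst h.continuousOn_angle ⟨hs, ht⟩

theorem angle_mem (h : IsPruferSol C c σ w θ s t) (hs : 0 ≤ θ s) (ht : θ t ≤ π) :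
    ∀ x ∈ Icc s t, θ x ∈ Icc 0 π := by
  intro x hx
  constructor
  · rcases hx.1.eq_or_lt with rfl | hlt
    · exact hs
    · exact ((h.mono le_rfl hx.2).angle_pos hlt hs).le
  · rcases hx.2.eq_or_lt with rfl | hlt
    · exact ht
    · by_contra! hgt
      have := (h.mono hx.1 le_rfl).nat_mul_pi_lt_angle (j := 1) hlt (by simpa using hgt.le)
      simp only [Nat.cast_one, one_mul] at this
      linarith

theorem isArc (h : IsPruferSol C c σ w θ s t) (hs : 0 ≤ θ s) (ht : θ t ≤ π) :
    IsArc C c σ (displacement w θ) (velocity w θ) s t where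
  damping := h.damping
  stiffness_nonneg := h.stiffness_nonneg
  nonneg x hx :=
    have hθ := h.angle_mem hs ht x hx
    mul_nonneg (exp_pos _).le (sin_nonneg_of_nonneg_of_le_pi hθ.1 hθ.2)
  hasDerivAt _ hx := h.hasDerivAt_displacement hx
  hasDerivAt_slope _ hx := h.hasDerivAt_velocity hx

/-! ### Amplitude and rotation estimates -/

theorem exp_le_of_angle_le_pi (h : IsPruferSol C c σ w θ s t) (hst : s ≤ t) {D T : ℝ} {ψ : ℝ → ℝ}
    (hT : t - s ≤ T) (hs : θ s = 0) (ht : θ t ≤ π) (hD : exp (w s) ≤ D)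
    (hσ : ∀ x ∈ Icc s t, ∀ M, |displacement w θ x| ≤ M → σ x ≤ ψ M) :
    exp (w t) ≤ D * (1 + T + ψ (D * T) * T ^ 2) := by
  have harc := h.isArc hs.ge ht
  have hU : displacement w θ s = 0 := by simp [displacement, hs]
  have hV : velocity w θ s = exp (w s) := by simp [velocity, hs]
  have hD0 : 0 ≤ D := (exp_pos _).le.trans hD
  have hUle : ∀ x ∈ Icc s t, displacement w θ x ≤ D * T := fun x hx =>
    (harc.le_mul hD0 (hV.trans_le hD) hU x hx).trans (by gcongr; linarith [hx.2])
  have hspring : ∀ x ∈ Icc s t, σ x * displacement w θ x ≤ ψ (D * T) * (D * T) := fun x hx => by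
    have hσx := hσ x hx (D * T) (by rw [abs_of_nonneg (harc.nonneg x hx)]; exact hUle x hx)
    exact mul_le_mul hσx (hUle x hx) (harc.nonneg x hx) ((h.stiffness_nonneg x hx).trans hσx)
  have hmem : t ∈ Icc s t := ⟨hst, le_rfl⟩
  have hQ : 0 ≤ ψ (D * T) * (D * T) :=
    (mul_nonneg (h.stiffness_nonneg t hmem) (harc.nonneg t hmem)).trans (hspring t hmem)
  have hdown : -velocity w θ t ≤ ψ (D * T) * (D * T) * T :=
    (harc.neg_slope_le hspring (hV ▸ (exp_pos _).le) t hmem).trans (by gcongr)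
  have hup := harc.slope_le hD0 (hV.trans_le hD) t hmem
  have hVabs : |velocity w θ t| ≤ D + ψ (D * T) * (D * T) * T :=
    abs_le.2 ⟨by linarith, hup.trans (le_add_of_nonneg_right
      (mul_nonneg hQ (by linarith)))⟩
  have hUabs : |displacement w θ t| ≤ D * T := by
    rw [abs_of_nonneg (harc.nonneg t hmem)]
    exact hUle t hmem
  linarith [exp_le_abs_displacement_add_abs_velocity w θ t]

theorem exists_amplitude_bound (ψ : ℝ → ℝ) (a b α : ℝ) (j : ℕ) :
    ∃ D, ∀ (C : ℝ) (c σ w θ : ℝ → ℝ), IsPruferSol C c σ w θ a b →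
      (∀ x ∈ Icc a b, ∀ M, |displacement w θ x| ≤ M → σ x ≤ ψ M) → θ a = 0 → exp (w a) ≤ α →
      ∀ x ∈ Icc a b, θ x ≤ j * π → exp (w x) ≤ D := by
  induction j with
  | zero =>
    refine ⟨α, fun C c σ w θ h _ hθ hα x hx hθx => ?_⟩
    rcases hx.1.eq_or_lt with rfl | hlt
    · exact hα
    · have := (h.mono le_rfl hx.2).angle_pos hlt hθ.ge
      simp only [Nat.cast_zero, zero_mul] at hθx
      linarith
  | succ j ih =>
    obtain ⟨D, hD⟩ := ih
    refine ⟨max D (D * (1 + (b - a) + ψ (D * (b - a)) * (b - a) ^ 2)),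
      fun C c σ w θ h hσ hθ hα x hx hθx => ?_⟩
    rcases le_or_gt (θ x) (j * π) with hle | hgt
    · exact (hD C c σ w θ h hσ hθ hα x hx hle).trans (le_max_left _ _)
    obtain ⟨s, hs, hθs⟩ := (h.mono le_rfl hx.2).exists_angle_eq (φ := j * π) hx.1
      (by rw [hθ]; positivity) hgt.le
    have hDs := hD C c σ w θ h hσ hθ hα s ⟨hs.1, hs.2.trans hx.2⟩ hθs.le
    refine le_trans ?_ (le_max_right _ _)
    refine ((h.mono hs.1 hx.2).sub_nat_mul_pi j).exp_le_of_angle_le_pi hs.2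
      (by linarith [hs.1, hx.2]) (by simp [hθs]) (by push_cast at hθx; linarith) hDs
      fun z hz M hM => hσ z ⟨hs.1.trans hz.1, hz.2.trans hx.2⟩ M ?_
    simpa [displacement_sub_nat_mul_pi, abs_mul] using hM

theorem exists_fast_lap {ψ : ℝ → ℝ} {η m P : ℝ} (hη : 0 < η) (hm : 0 < m)
    (hP : C ^ 2 + (2 * π / η) ^ 2 ≤ 2 * P) (S : ℝ) :
    ∃ A, ∀ (c σ w θ : ℝ → ℝ) (s : ℝ), IsPruferSol C c σ w θ s (s + 3 * η) →
      (∀ x ∈ Icc s (s + 3 * η), IsStiffness ψ P m (displacement w θ x) (σ x)) → θ s = 0 →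
      A ≤ exp (w s) → ∃ t ∈ Icc s (s + 3 * η), θ t = π ∧ S ≤ exp (w t) := by
  obtain ⟨A, hA⟩ := IsArc.exists_steep_start (C := C) (ψ := ψ) hη hm hP (3 * η) S
  refine ⟨A, fun c σ w θ s h hσ hs hAs => ?_⟩
  have hU : displacement w θ s = 0 := by simp [displacement, hs]
  have hV : A ≤ velocity w θ s := by simpa [velocity, hs] using hAs
  have hreach : π ≤ θ (s + 3 * η) := by
    by_contra! hlt
    exact (hA c σ _ _ s _ (h.isArc hs.ge hlt.le) hσ hU hV (by linarith) (by linarith)).1.false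
  obtain ⟨t, ht, hθt⟩ := h.exists_angle_eq (by linarith) (hs.trans_le pi_pos.le) hreach
  have hst : s < t := ht.1.lt_of_ne (by
    rintro rfl
    exact pi_ne_zero (hθt.symm.trans hs))
  have hend := (hA c σ _ _ s t ((h.mono le_rfl ht.2).isArc hs.ge hθt.le)
    (fun x hx => hσ x ⟨hx.1, hx.2.trans ht.2⟩) hU hV hst (by linarith [ht.2])).2
    (by simp [displacement, hθt])
  exact ⟨t, ht, hθt, by simpa [velocity, hθt] using hend⟩

theorem exists_fast_rotation {ψ : ℝ → ℝ} {η m P : ℝ} (hη : 0 < η) (hm : 0 < m)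
    (hP : C ^ 2 + (2 * π / η) ^ 2 ≤ 2 * P) (a b S : ℝ) (j : ℕ) (hj : a + j * (3 * η) ≤ b) :
    ∃ A, ∀ c σ w θ : ℝ → ℝ, IsPruferSol C c σ w θ a b →
      (∀ x ∈ Icc a b, IsStiffness ψ P m (displacement w θ x) (σ x)) → θ a = 0 → A ≤ exp (w a) →
      ∃ t ∈ Icc a (a + j * (3 * η)), θ t = j * π ∧ S ≤ exp (w t) := by
  induction j generalizing S with
  | zero => exact ⟨S, fun c σ w θ _ _ hθ hA => ⟨a, by simp, by simpa using hθ, hA⟩⟩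
  | succ j ih =>
    push_cast at hj
    obtain ⟨A₁, hA₁⟩ := exists_fast_lap (C := C) (ψ := ψ) hη hm hP S
    obtain ⟨A, hA⟩ := ih A₁ (by linarith)
    refine ⟨A, fun c σ w θ h hσ hθ hAa => ?_⟩
    obtain ⟨s, hs, hθs, hAs⟩ := hA c σ w θ h hσ hθ hAa
    have hsb : s + 3 * η ≤ b := by linarith [hs.2]
    obtain ⟨t, ht, hθt, hSt⟩ := hA₁ c σ w _ s ((h.mono hs.1 hsb).sub_nat_mul_pi j)
      (fun x hx => (hσ x ⟨hs.1.trans hx.1, hx.2.trans hsb⟩).of_abs_eq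
        (by simp [displacement_sub_nat_mul_pi, abs_mul])) (by simp [hθs]) hAs
    refine ⟨t, ⟨hs.1.trans ht.1, ?_⟩, ?_, hSt⟩ <;> push_cast
    · linarith [hs.2, ht.2]
    · linarith

theorem angle_le_pi_of_slow (h : IsPruferSol C c σ w θ a b) (hab : a ≤ b) {ε : ℝ} (hθ : θ a = 0)
    (hσ : ∀ x ∈ Icc a b, |displacement w θ x| ≤ exp (w a) * (b - a) → σ x ≤ ε)
    (hε : exp (C * (b - a)) * ε * (b - a) ^ 2 ≤ 1) : θ b ≤ π := by
  by_contra! hlt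
  obtain ⟨t, ht, hθt⟩ := h.exists_angle_eq hab (hθ.trans_le pi_pos.le) hlt.le
  have harc := (h.mono le_rfl ht.2).isArc hθ.ge hθt.le
  have hV : velocity w θ a = exp (w a) := by simp [velocity, hθ]
  have hspring : ∀ x ∈ Icc a t, σ x * displacement w θ x ≤ ε * (exp (w a) * (b - a)) := by
    intro x hx
    have hU : displacement w θ x ≤ exp (w a) * (b - a) :=
      (harc.le_mul (exp_pos _).le hV.le (by simp [displacement, hθ]) x hx).trans
        (by gcongr; linarith [hx.2, ht.2])
    have hσx := hσ x ⟨hx.1, hx.2.trans ht.2⟩ (by rwa [abs_of_nonneg (harc.nonneg x hx)])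
    exact mul_le_mul hσx hU (harc.nonneg x hx) ((harc.stiffness_nonneg x hx).trans hσx)
  have hrise : 0 ≤ velocity w θ t := by
    refine harc.le_slope (T := b - a) hspring (by linarith [ht.2]) le_rfl ?_ t ⟨ht.1, le_rfl⟩
    rw [hV]
    nlinarith [exp_pos (w a)]
  simp only [velocity, hθt, cos_pi] at hrise
  linarith [exp_pos (w t)]

theorem exists_hasNodes (h : IsPruferSol C c σ w θ a b) (hab : a ≤ b) {k : ℕ} (ha : θ a = 0)
    (hb : θ b = k * π) : ∃ rr, HasNodes (displacement w θ) a b k rr := by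
  have hex : ∀ j : ℕ, ∃ x, j ≤ k → x ∈ Icc a b ∧ θ x = j * π := fun j => by
    by_cases hj : j ≤ k
    · obtain ⟨x, hx⟩ := h.exists_angle_eq (φ := j * π) hab (ha.trans_le (by positivity))
        (hb ▸ by gcongr)
      exact ⟨x, fun _ => hx⟩
    · exact ⟨0, fun hj' => absurd hj' hj⟩
  choose rr hrr using hex
  have cross {j : ℕ} {s t : ℝ} (hs : s ∈ Icc a b) (ht : t ∈ Icc a b) (hst : s < t)
      (hj : j * π ≤ θ s) : j * π < θ t := (h.mono hs.1 ht.2).nat_mul_pi_lt_angle hst hj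
  have hleft := hrr 0 k.zero_le
  have hright := hrr k le_rfl
  refine ⟨rr, ?_, ?_, fun j hj => ?_, fun j hj => ?_, fun j hj x hx => ?_⟩
  · refine hleft.1.1.eq_of_not_lt' fun hlt => ?_
    exact (cross ⟨le_rfl, hab⟩ hleft.1 hlt (by simp [ha])).ne' hleft.2
  · refine hright.1.2.eq_of_not_lt fun hlt => ?_
    exact (cross hright.1 ⟨hab, le_rfl⟩ hlt hright.2.ge).ne' hb
  · by_contra! hge
    have hlt : rr (j + 1) < rr j := hge.lt_of_ne fun heq => by
      have := (heq ▸ (hrr (j + 1) hj).2).symm.trans (hrr j hj.le).2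
      push_cast at this
      linarith [pi_pos]
    have := cross (hrr (j + 1) hj).1 (hrr j hj.le).1 hlt (hrr (j + 1) hj).2.ge
    rw [(hrr j hj.le).2] at this
    push_cast at this
    linarith [pi_pos]
  · rw [displacement, (hrr j hj).2, sin_nat_mul_pi, mul_zero]
  · have hs := hrr j hj.le
    have ht := hrr (j + 1) hj
    have hxab : x ∈ Icc a b := ⟨hs.1.1.trans hx.1.le, hx.2.le.trans ht.1.2⟩
    have hlow : j * π < θ x := cross hs.1 hxab hx.1 hs.2.ge
    have hhigh : θ x < (j + 1 : ℕ) * π := by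
      by_contra! hge
      exact (cross hxab ht.1 hx.2 hge).ne' ht.2
    rw [← displacement_sub_nat_mul_pi]
    push_cast at hhigh
    exact mul_pos (exp_pos _) (sin_pos_of_pos_of_lt_pi (by linarith) (by linarith))

end IsPruferSol

/-! ### The Prüfer flow -/

theorem exists_flow_of_lipschitzWith_of_norm_le {E : Type*} [NormedAddCommGroup E]
    [NormedSpace ℝ E] [CompleteSpace E] {X : ℝ → E → E} {L B : NNReal}
    (hL : ∀ r, LipschitzWith L (X r)) (hc : ∀ z, Continuous fun r => X r z)
    (hB : ∀ r z, ‖X r z‖ ≤ B) {a b : ℝ} (hab : a ≤ b) (ρ : NNReal) :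
    ∃ Φ : E × ℝ → E, ContinuousOn Φ (Metric.closedBall 0 ρ ×ˢ Icc a b) ∧
      ∀ z ∈ Metric.closedBall (0 : E) ρ, Φ (z, a) = z ∧
        ∀ x ∈ Icc a b, HasDerivAt (fun x => Φ (z, x)) (X x (Φ (z, x))) x := by
  have hPL : IsPicardLindelof X (tmin := a - 1) (tmax := b + 1) ⟨a, by constructor <;> linarith⟩
      0 (ρ + B * (b + 1 - a).toNNReal) ρ B L := by
    refine ⟨fun r _ => (hL r).lipschitzOnWith, fun z _ => (hc z).continuousOn,
      fun r _ z _ => hB r z, ?_⟩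
    rw [max_eq_left (by linarith), NNReal.coe_add, NNReal.coe_mul,
      Real.coe_toNNReal _ (by linarith)]
    simp
  obtain ⟨Φ, hΦ, hΦc⟩ := hPL.exists_forall_mem_closedBall_eq_hasDerivWithinAt_continuousOn
  refine ⟨Φ, hΦc.mono (prod_mono subset_rfl (Icc_subset_Icc (by linarith) (by linarith))),
    fun z hz => ⟨(hΦ z hz).1, fun x hx => ?_⟩⟩
  exact ((hΦ z hz).2 x ⟨by linarith [hx.1], by linarith [hx.2]⟩).hasDerivAt
    (Icc_mem_nhds (by linarith [hx.1]) (by linarith [hx.2]))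

theorem abs_mul_sub_mul_le {x x' y y' A B : ℝ} (hx : |x| ≤ A) (hy' : |y'| ≤ B) :
    |x * y - x' * y'| ≤ A * |y - y'| + |x - x'| * B := by
  calc |x * y - x' * y'| = |x * (y - y') + (x - x') * y'| := by ring_nf
    _ ≤ |x| * |y - y'| + |x - x'| * |y'| := by
        rw [← abs_mul, ← abs_mul]
        exact abs_add_le _ _
    _ ≤ A * |y - y'| + |x - x'| * B := by gcongr

section Rescaling

variable {E : Type*} [SeminormedAddCommGroup E] [NormedSpace ℝ E] {G : E → ℝ} {K : NNReal}
  {p q : E}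

theorem abs_rescale_le (hG : LipschitzWith K G) (hG0 : G 0 = 0) (hp : ‖p‖ ≤ 1) (x : ℝ) :
    |exp (-x) * G (exp x • p)| ≤ K := by
  have h := hG.norm_le_mul hG0 (exp x • p)
  rw [norm_smul, norm_eq_abs, norm_eq_abs, abs_exp] at h
  rw [abs_mul, abs_exp, exp_neg, inv_mul_le_iff₀ (exp_pos x)]
  nlinarith [mul_le_of_le_one_right (exp_pos x).le hp, K.coe_nonneg]

theorem abs_rescale_sub_rescale_le_mul (hG : LipschitzWith K G) (hG0 : G 0 = 0) (hq : ‖q‖ ≤ 1)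
    (x y : ℝ) : |exp (-x) * G (exp x • q) - exp (-y) * G (exp y • q)| ≤ 2 * K * |x - y| := by
  wlog hyx : y ≤ x generalizing x y
  · rw [abs_sub_comm, abs_sub_comm x]
    exact this y x (le_of_not_ge hyx)
  have hstep : |G (exp x • q) - G (exp y • q)| ≤ K * (exp x - exp y) := by
    have h := hG.norm_sub_le (exp x • q) (exp y • q)
    rw [← sub_smul, norm_smul, norm_eq_abs, norm_eq_abs,
      abs_of_nonneg (sub_nonneg.2 (exp_le_exp.2 hyx))] at h
    exact h.trans (mul_le_mul_of_nonneg_left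
      (mul_le_of_le_one_right (sub_nonneg.2 (exp_le_exp.2 hyx)) hq) K.coe_nonneg)
  have hval : |G (exp y • q)| ≤ K * exp y := by
    have h := hG.norm_le_mul hG0 (exp y • q)
    rw [norm_smul, norm_eq_abs, norm_eq_abs, abs_exp] at h
    exact h.trans (mul_le_mul_of_nonneg_left
      (mul_le_of_le_one_right (exp_pos y).le hq) K.coe_nonneg)
  have hmono : exp (-x) ≤ exp (-y) := exp_le_exp.2 (neg_le_neg hyx)
  have hcancel (z : ℝ) : exp (-z) * exp z = 1 := by rw [← exp_add]; simp
  calc |exp (-x) * G (exp x • q) - exp (-y) * G (exp y • q)|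
      ≤ exp (-x) * |G (exp x • q) - G (exp y • q)| + |exp (-x) - exp (-y)| * (K * exp y) :=
        abs_mul_sub_mul_le (abs_exp _).le hval
    _ ≤ exp (-x) * (K * (exp x - exp y)) + (exp (-y) - exp (-x)) * (K * exp y) := by
        rw [abs_sub_comm (exp (-x)), abs_of_nonneg (sub_nonneg.2 hmono)]
        gcongr
    _ = 2 * K * (1 - exp (y - x)) := by
        rw [sub_eq_neg_add y x, exp_add]
        linear_combination K * hcancel x + K * hcancel y
    _ ≤ 2 * K * |x - y| := by
        gcongr
        linarith [add_one_le_exp (y - x), le_abs_self (x - y)]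

theorem abs_rescale_sub_rescale_le (hG : LipschitzWith K G) (hG0 : G 0 = 0) (hq : ‖q‖ ≤ 1)
    (x y : ℝ) :
    |exp (-x) * G (exp x • p) - exp (-y) * G (exp y • q)| ≤ 2 * K * |x - y| + K * ‖p - q‖ := by
  have hpq : |exp (-x) * G (exp x • p) - exp (-x) * G (exp x • q)| ≤ K * ‖p - q‖ := by
    have h := hG.norm_sub_le (exp x • p) (exp x • q)
    rw [← smul_sub, norm_smul, norm_eq_abs, norm_eq_abs, abs_exp] at h
    rw [← mul_sub, abs_mul, abs_exp, exp_neg, inv_mul_le_iff₀ (exp_pos x)]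
    linarith
  linarith [abs_sub_le (exp (-x) * G (exp x • p)) (exp (-x) * G (exp x • q))
    (exp (-y) * G (exp y • q)), abs_rescale_sub_rescale_le_mul hG hG0 hq x y]

end Rescaling

/-- The value `h = e ^ (-w) H(r, e ^ w sin θ, e ^ w cos θ)` at `z = (w, θ)`: the force of the
equation `u'' = H(r, u, u')` relative to the amplitude. -/
noncomputable def relativeForce (H : ℝ → ℝ × ℝ → ℝ) (r : ℝ) (z : ℝ × ℝ) : ℝ :=
  exp (-z.1) * H r (exp z.1 • (sin z.2, cos z.2))

/-- The vector field of `u'' = H(r, u, u')` in Prüfer coordinates `z = (w, θ)`. -/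
noncomputable def pruferField (H : ℝ → ℝ × ℝ → ℝ) (r : ℝ) (z : ℝ × ℝ) : ℝ × ℝ :=
  (sin z.2 * cos z.2 + cos z.2 * relativeForce H r z,
    cos z.2 * cos z.2 - sin z.2 * relativeForce H r z)

section PruferField

variable {H : ℝ → ℝ × ℝ → ℝ} {K : NNReal} {r : ℝ}

theorem norm_sin_cos_le (φ : ℝ) : ‖(sin φ, cos φ)‖ ≤ 1 :=
  norm_prod_le_iff.2 ⟨abs_sin_le_one φ, abs_cos_le_one φ⟩

theorem abs_relativeForce_le (hH : LipschitzWith K (H r)) (hH0 : H r 0 = 0) (z : ℝ × ℝ) :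
    |relativeForce H r z| ≤ K :=
  abs_rescale_le hH hH0 (norm_sin_cos_le _) _

theorem abs_sin_sub_sin_le (z z' : ℝ × ℝ) : |sin z.2 - sin z'.2| ≤ ‖z - z'‖ :=
  ((lipschitzWith_sin.norm_sub_le _ _).trans_eq (by simp)).trans (norm_snd_le (z - z'))

theorem abs_cos_sub_cos_le (z z' : ℝ × ℝ) : |cos z.2 - cos z'.2| ≤ ‖z - z'‖ :=
  ((lipschitzWith_cos.norm_sub_le _ _).trans_eq (by simp)).trans (norm_snd_le (z - z'))

theorem abs_relativeForce_sub_le (hH : LipschitzWith K (H r)) (hH0 : H r 0 = 0) (z z' : ℝ × ℝ) :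
    |relativeForce H r z - relativeForce H r z'| ≤ 3 * K * ‖z - z'‖ := by
  have hdir : ‖(sin z.2, cos z.2) - (sin z'.2, cos z'.2)‖ ≤ ‖z - z'‖ :=
    norm_prod_le_iff.2 ⟨abs_sin_sub_sin_le z z', abs_cos_sub_cos_le z z'⟩
  calc |relativeForce H r z - relativeForce H r z'|
      ≤ 2 * K * |z.1 - z'.1| + K * ‖(sin z.2, cos z.2) - (sin z'.2, cos z'.2)‖ :=
        abs_rescale_sub_rescale_le hH hH0 (norm_sin_cos_le _) _ _
    _ ≤ 2 * K * ‖z - z'‖ + K * ‖z - z'‖ := by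
        gcongr
        exact norm_fst_le (z - z')
    _ = 3 * K * ‖z - z'‖ := by ring

theorem norm_pruferField_le (hH : LipschitzWith K (H r)) (hH0 : H r 0 = 0) (z : ℝ × ℝ) :
    ‖pruferField H r z‖ ≤ 1 + K := by
  have hunit {x y B : ℝ} (hx : |x| ≤ 1) (hy : |y| ≤ B) : |x * y| ≤ B := by
    rw [abs_mul]
    nlinarith [abs_nonneg x, abs_nonneg y]
  have hs := abs_sin_le_one z.2
  have hc := abs_cos_le_one z.2
  have hh := abs_relativeForce_le hH hH0 z
  exact norm_prod_le_iff.2 ⟨(abs_add_le _ _).trans (add_le_add (hunit hs hc) (hunit hc hh)),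
    (abs_sub _ _).trans (add_le_add (hunit hc hc) (hunit hs hh))⟩

theorem lipschitzWith_pruferField (hH : LipschitzWith K (H r)) (hH0 : H r 0 = 0) :
    LipschitzWith (2 + 4 * K) (pruferField H r) := by
  refine LipschitzWith.of_dist_le_mul fun z z' => ?_
  rw [dist_eq_norm, dist_eq_norm]
  set d := ‖z - z'‖
  have hs := abs_sin_sub_sin_le z z'
  have hc := abs_cos_sub_cos_le z z'
  have hcos := abs_cos_le_one z'.2
  have hunit {x x' y y' M N : ℝ} (hx : |x| ≤ 1) (hdx : |x - x'| ≤ d) (hy' : |y'| ≤ M)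
      (hdy : |y - y'| ≤ N * d) : |x * y - x' * y'| ≤ (N + M) * d := by
    have := abs_mul_sub_mul_le (y := y) (x' := x') hx hy'
    nlinarith [(abs_nonneg y').trans hy']
  have htrig {x x' : ℝ} (hx : |x| ≤ 1) (hdx : |x - x'| ≤ d) :
      |x * cos z.2 - x' * cos z'.2| ≤ (1 + 1) * d := hunit hx hdx hcos (by simpa using hc)
  have hforce {x x' : ℝ} (hx : |x| ≤ 1) (hdx : |x - x'| ≤ d) :
      |x * relativeForce H r z - x' * relativeForce H r z'| ≤ (3 * K + K) * d :=
    hunit hx hdx (abs_relativeForce_le hH hH0 z') (abs_relativeForce_sub_le hH hH0 z z')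
  push_cast
  refine norm_prod_le_iff.2 ⟨?_, ?_⟩
  · have := (abs_add_le _ _).trans
      (add_le_add (htrig (abs_sin_le_one z.2) hs) (hforce (abs_cos_le_one z.2) hc))
    refine (le_of_eq ?_).trans (this.trans_eq (by ring))
    simp only [pruferField, Prod.fst_sub, norm_eq_abs]
    ring_nf
  · have := (abs_sub _ _).trans
      (add_le_add (htrig (abs_cos_le_one z.2) hc) (hforce (abs_sin_le_one z.2) hs))
    refine (le_of_eq ?_).trans (this.trans_eq (by ring))
    simp only [pruferField, Prod.snd_sub, norm_eq_abs]
    ring_nf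

end PruferField

/-- A trajectory of `u'' = H(r, u, u')` on `[a, b]` in Prüfer coordinates, starting at angle `0`,
that is, with `u a = 0` and `u' a = e ^ w a > 0`. -/
structure IsPruferTrajectory (H : ℝ → ℝ × ℝ → ℝ) (w θ : ℝ → ℝ) (a b : ℝ) : Prop where
  angle_left : θ a = 0
  hasDerivAt_logAmplitude : ∀ x ∈ Icc a b, HasDerivAt w (pruferField H x (w x, θ x)).1 x
  hasDerivAt_angle : ∀ x ∈ Icc a b, HasDerivAt θ (pruferField H x (w x, θ x)).2 x

theorem exists_isPruferTrajectory_angle_eq {H : ℝ → ℝ × ℝ → ℝ} {K : NNReal}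
    (hH : ∀ r, LipschitzWith K (H r)) (hH0 : ∀ r, H r 0 = 0)
    (hHc : ∀ z, Continuous fun r => H r z) {a b y₀ y₁ φ : ℝ} (hab : a ≤ b) (hy : y₀ ≤ y₁)
    (hlow : ∀ w θ, IsPruferTrajectory H w θ a b → w a = y₀ → θ b ≤ φ)
    (hhigh : ∀ w θ, IsPruferTrajectory H w θ a b → w a = y₁ → φ ≤ θ b) :
    ∃ w θ, IsPruferTrajectory H w θ a b ∧ w a ≤ y₁ ∧ θ b = φ := by
  have hXc (z : ℝ × ℝ) : Continuous fun r => pruferField H r z := by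
    have : Continuous fun r => relativeForce H r z := continuous_const.mul (hHc _)
    exact (continuous_const.add (continuous_const.mul this)).prodMk
      (continuous_const.sub (continuous_const.mul this))
  set ρ : NNReal := max ‖y₀‖₊ ‖y₁‖₊
  obtain ⟨Φ, hΦc, hΦ⟩ := exists_flow_of_lipschitzWith_of_norm_le (X := pruferField H)
    (fun r => lipschitzWith_pruferField (hH r) (hH0 r)) hXc
    (B := 1 + K) (fun r z => by exact_mod_cast norm_pruferField_le (hH r) (hH0 r) z) hab ρ
  have hball : ∀ y ∈ Icc y₀ y₁, ((y, 0) : ℝ × ℝ) ∈ Metric.closedBall 0 (ρ : ℝ) := fun y hy => by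
    rw [mem_closedBall_zero_iff]
    refine norm_prod_le_iff.2 ⟨?_, by simp⟩
    simpa [ρ] using abs_le_max_abs_abs hy.1 hy.2
  have htraj : ∀ y ∈ Icc y₀ y₁,
      IsPruferTrajectory H (fun x => (Φ ((y, 0), x)).1) (fun x => (Φ ((y, 0), x)).2) a b ∧
        (Φ ((y, 0), a)).1 = y := fun y hy => by
    obtain ⟨hstart, hderiv⟩ := hΦ _ (hball y hy)
    exact ⟨⟨by simp [hstart], fun x hx => (hderiv x hx).fst, fun x hx => (hderiv x hx).snd⟩,
      by simp [hstart]⟩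
  have hcont : ContinuousOn (fun y => (Φ ((y, 0), b)).2) (Icc y₀ y₁) :=
    continuous_snd.comp_continuousOn (hΦc.comp (f := fun y : ℝ => (((y, 0) : ℝ × ℝ), b))
      (by fun_prop) fun y hy => ⟨hball y hy, hab, le_rfl⟩)
  have hleft := htraj y₀ ⟨le_rfl, hy⟩
  have hright := htraj y₁ ⟨hy, le_rfl⟩
  obtain ⟨y, hyI, hyφ⟩ := intermediate_value_Icc hy hcont
    ⟨hlow _ _ hleft.1 hleft.2, hhigh _ _ hright.1 hright.2⟩
  exact ⟨_, _, (htraj y hyI).1, (htraj y hyI).2.trans_le hyI.2, hyφ⟩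

/-! ### Nodal solutions by shooting -/

/-- `u'' = H(r, u, u')` is the equation of an oscillator: the force `H` splits into a damping with
coefficient in `[0, C]` and a restoring force whose stiffness obeys the bounds `ψ`, `P`, `m`. -/
def IsDampedOscillator (C : ℝ) (ψ : ℝ → ℝ) (P m : ℝ) (H : ℝ → ℝ × ℝ → ℝ) : Prop :=
  ∀ r z, ∃ c ∈ Icc 0 C, ∃ σ, IsStiffness ψ P m z.1 σ ∧ H r z = -(c * z.2) - σ * z.1

namespace IsDampedOscillator

variable {C P m : ℝ} {ψ : ℝ → ℝ} {H : ℝ → ℝ × ℝ → ℝ}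

theorem apply_zero (hH : IsDampedOscillator C ψ P m H) (r : ℝ) : H r 0 = 0 := by
  obtain ⟨c, -, σ, -, h⟩ := hH r 0
  simpa using h

theorem exists_isPruferSol (hH : IsDampedOscillator C ψ P m H) {w θ : ℝ → ℝ} {a b : ℝ}
    (h : IsPruferTrajectory H w θ a b) :
    ∃ c σ : ℝ → ℝ, IsPruferSol C c σ w θ a b ∧
      (∀ x, IsStiffness ψ P m (displacement w θ x) (σ x)) ∧
      ∀ x, H x (displacement w θ x, velocity w θ x) =
        -(c x * velocity w θ x) - σ x * displacement w θ x := by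
  choose c hc σ hσ hforce using fun x => hH x (displacement w θ x, velocity w θ x)
  have hrel (x : ℝ) :
      relativeForce H x (w x, θ x) = -(c x * cos (θ x)) - σ x * sin (θ x) := by
    have hcancel : exp (-w x) * exp (w x) = 1 := by rw [← exp_add]; simp
    have := hforce x
    simp only [displacement, velocity] at this
    simp only [relativeForce, Prod.smul_mk, smul_eq_mul, this]
    linear_combination (-(c x * cos (θ x)) - σ x * sin (θ x)) * hcancel
  refine ⟨c, σ, ⟨fun x _ => hc x, fun x _ => (hσ x).nonneg, fun x hx => ?_, fun x hx => ?_⟩,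
    hσ, hforce⟩
  · exact (h.hasDerivAt_logAmplitude x hx).congr_deriv (by simp only [pruferField, hrel]; ring)
  · exact (h.hasDerivAt_angle x hx).congr_deriv (by simp only [pruferField, hrel]; ring)

end IsDampedOscillator

theorem exists_slow_start {C : ℝ} {ψ : ℝ → ℝ} (hψ : Tendsto ψ (𝓝[>] 0) (𝓝 0)) {a b : ℝ}
    (hab : a < b) :
    ∃ α > 0, ∀ c σ w θ : ℝ → ℝ, IsPruferSol C c σ w θ a b →
      (∀ x ∈ Icc a b, ∀ M, |displacement w θ x| ≤ M → σ x ≤ ψ M) → θ a = 0 → exp (w a) = α →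
      θ b ≤ π := by
  have hT : 0 < b - a := sub_pos.2 hab
  have hε : 0 < exp (-(C * (b - a))) / (b - a) ^ 2 := by positivity
  obtain ⟨M, hM, hM0⟩ := ((hψ.eventually (ge_mem_nhds hε)).and self_mem_nhdsWithin).exists
  refine ⟨M / (b - a), div_pos hM0 hT, fun c σ w θ h hσ hθ hw => ?_⟩
  refine h.angle_le_pi_of_slow hab.le (ε := exp (-(C * (b - a))) / (b - a) ^ 2) hθ
    (fun x hx hx' => ?_) (le_of_eq ?_)
  · exact (hσ x hx M (by rwa [hw, div_mul_cancel₀ _ hT.ne'] at hx')).trans hM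
  · rw [mul_assoc, div_mul_cancel₀ _ (by positivity), ← exp_add, add_neg_cancel, exp_zero]

theorem exists_nodal_solution {C P m a b : ℝ} {ψ : ℝ → ℝ} {k : ℕ} (hab : a < b) (hk : 1 ≤ k)
    (hm : 0 < m) (hψ : Tendsto ψ (𝓝[>] 0) (𝓝 0))
    (hP : C ^ 2 + (6 * π * k / (b - a)) ^ 2 ≤ 2 * P) :
    ∃ D, ∀ (H : ℝ → ℝ × ℝ → ℝ) (K : NNReal), (∀ r, LipschitzWith K (H r)) →
      (∀ z, Continuous fun r => H r z) → IsDampedOscillator C ψ P m H →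
      ∃ (u v : ℝ → ℝ) (rr : ℕ → ℝ), HasNodes u a b k rr ∧ ∀ x ∈ Icc a b,
        HasDerivAt u (v x) x ∧ HasDerivAt v (H x (u x, v x)) x ∧ |u x| ≤ D := by
  have hk' : (1 : ℝ) ≤ k := by exact_mod_cast hk
  have hba : 0 < b - a := sub_pos.2 hab
  obtain ⟨α₀, hα₀, slow⟩ := exists_slow_start (C := C) hψ hab
  obtain ⟨A, fast⟩ := IsPruferSol.exists_fast_rotation (C := C) (ψ := ψ) (m := m) (P := P)
    (η := (b - a) / (3 * k)) (by positivity) hm (hP.trans_eq' (by field_simp; ring)) a b 0 k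
    (le_of_eq (by field_simp; ring))
  obtain ⟨D, amplitude⟩ := IsPruferSol.exists_amplitude_bound ψ a b (max A α₀) k
  have hα₁ : 0 < max A α₀ := hα₀.trans_le (le_max_right _ _)
  refine ⟨D, fun H K hLip hcont hH => ?_⟩
  have hlow (w θ) (htraj : IsPruferTrajectory H w θ a b) (hw : w a = log α₀) : θ b ≤ k * π := by
    obtain ⟨c, σ, hsol, hσ, -⟩ := hH.exists_isPruferSol htraj
    have hslow := slow c σ w θ hsol (fun x _ => (hσ x).le) htraj.angle_left
      (by rw [hw, exp_log hα₀])
    exact hslow.trans (le_mul_of_one_le_left pi_pos.le hk')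
  have hhigh (w θ) (htraj : IsPruferTrajectory H w θ a b) (hw : w a = log (max A α₀)) :
      k * π ≤ θ b := by
    obtain ⟨c, σ, hsol, hσ, -⟩ := hH.exists_isPruferSol htraj
    obtain ⟨t, ht, hθt, -⟩ := fast c σ w θ hsol (fun x _ => hσ x) htraj.angle_left
      (by rw [hw, exp_log hα₁]; exact le_max_left _ _)
    exact (hsol.mono ht.1 le_rfl).nat_mul_pi_le_angle (ht.2.trans_eq (by field_simp; ring)) hθt.ge
  obtain ⟨w, θ, htraj, hwa, hθb⟩ := exists_isPruferTrajectory_angle_eq hLip hH.apply_zero hcont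
    hab.le (log_le_log hα₀ (le_max_right _ _)) hlow hhigh
  obtain ⟨c, σ, hsol, hσ, hforce⟩ := hH.exists_isPruferSol htraj
  have hwa' : exp (w a) ≤ max A α₀ := (exp_le_exp.2 hwa).trans_eq (exp_log hα₁)
  obtain ⟨rr, hrr⟩ := hsol.exists_hasNodes hab.le htraj.angle_left hθb
  refine ⟨displacement w θ, velocity w θ, rr, hrr, fun x hx =>
    ⟨hsol.hasDerivAt_displacement hx, hforce x ▸ hsol.hasDerivAt_velocity hx, ?_⟩⟩
  exact (abs_displacement_le w θ x).trans (amplitude C c σ w θ hsol (fun x _ => (hσ x).le)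
    htraj.angle_left hwa' x hx (hsol.angle_le_of_angle_right_eq hθb x hx))

/-! ### Superlinear nonlinearities -/

/-- The stiffness `f(u) / u` of the restoring force `-f(u)`, equal to `0` at `u = 0`. -/
noncomputable def stiffness (f : ℝ → ℝ) (u : ℝ) : ℝ := f u / u

/-- Superlinear nonlinearities, such as `|u| ^ (p - 1) * u` with `p > 1`: the stiffness `f(u) / u`
is nonnegative, vanishes at `0` and is infinite at `±∞`. -/
structure IsSuperlinear (f : ℝ → ℝ) : Prop where
  locallyLipschitz : LocallyLipschitz f
  map_zero : f 0 = 0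
  stiffness_nonneg : ∀ u, 0 ≤ stiffness f u
  tendsto_stiffness_zero : Tendsto (stiffness f) (𝓝 0) (𝓝 0)
  tendsto_stiffness_cobounded : Tendsto (stiffness f) (Bornology.cobounded ℝ) atTop

/-- The supremum of the stiffness on `[-M, M]`. -/
noncomputable def maxStiffness (f : ℝ → ℝ) (M : ℝ) : ℝ := sSup (stiffness f '' Icc (-M) M)

/-- The nonlinearity `f` with its stiffness frozen outside `[-R, R]`; it is globally Lipschitz and
agrees with `f` on `[-R, R]`. -/
noncomputable def linearExtension (f : ℝ → ℝ) (R u : ℝ) : ℝ :=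
  stiffness f (max (-R) (min R u)) * u

theorem stiffness_mul_self {f : ℝ → ℝ} (hf0 : f 0 = 0) (u : ℝ) : stiffness f u * u = f u :=
  div_mul_cancel_of_imp fun hu => hu ▸ hf0

theorem linearExtension_of_abs_le {f : ℝ → ℝ} {R u : ℝ} (hf0 : f 0 = 0) (hu : |u| ≤ R) :
    linearExtension f R u = f u := by
  obtain ⟨hl, hr⟩ := abs_le.1 hu
  rw [linearExtension, min_eq_right hr, max_eq_right hl, stiffness_mul_self hf0]

theorem linearExtension_eq {f : ℝ → ℝ} {R : ℝ} (hf0 : f 0 = 0) (hR : 0 ≤ R) (u : ℝ) :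
    linearExtension f R u = f (max (-R) (min R u)) + stiffness f R * max (u - R) 0 +
      stiffness f (-R) * min (u + R) 0 := by
  rcases le_total u (-R) with hu | hu
  · rw [linearExtension, min_eq_right (by linarith), max_eq_left hu, max_eq_right (by linarith),
      min_eq_left (by linarith), ← stiffness_mul_self hf0 (-R)]
    ring
  rcases le_total u R with hu' | hu'
  · rw [linearExtension_of_abs_le hf0 (abs_le.2 ⟨hu, hu'⟩), min_eq_right hu', max_eq_right hu,
      max_eq_right (by linarith), min_eq_right (by linarith)]
    ring
  · rw [linearExtension, min_eq_left hu', max_eq_right (by linarith), max_eq_left (by linarith),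
      min_eq_right (by linarith), ← stiffness_mul_self hf0 R]
    ring

theorem exists_lipschitzWith_comp_clamp {f : ℝ → ℝ} (hf : LocallyLipschitz f) {R : ℝ}
    (hR : 0 ≤ R) : ∃ K, LipschitzWith K fun u => f (max (-R) (min R u)) := by
  obtain ⟨K, hK⟩ := hf.locallyLipschitzOn.exists_lipschitzOnWith_of_compact
    (isCompact_Icc (a := -R) (b := R))
  exact ⟨K * 1, hK.to_restrict.comp (LipschitzWith.projIcc (neg_le_self hR))⟩

theorem exists_lipschitzWith_linearExtension {f : ℝ → ℝ} (hf : LocallyLipschitz f) (hf0 : f 0 = 0)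
    {R : ℝ} (hR : 0 ≤ R) : ∃ K, LipschitzWith K (linearExtension f R) := by
  obtain ⟨K, hK⟩ := exists_lipschitzWith_comp_clamp hf hR
  have hpos : LipschitzWith 1 fun u : ℝ => max (u - R) 0 :=
    (LipschitzWith.of_dist_le_mul (K := 1) fun u v => by simp).max_const 0
  have hneg : LipschitzWith 1 fun u : ℝ => min (u + R) 0 :=
    (LipschitzWith.of_dist_le_mul (K := 1) fun u v => by simp).min_const 0
  rw [funext (linearExtension_eq hf0 hR)]
  exact ⟨_, (hK.add ((lipschitzWith_smul (stiffness f R)).comp hpos)).add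
    ((lipschitzWith_smul (stiffness f (-R))).comp hneg)⟩

theorem abs_clamp_le {R u : ℝ} (hR : 0 ≤ R) : |max (-R) (min R u)| ≤ |u| := by
  refine abs_le.2 ⟨le_max_of_le_right (le_min (by linarith [abs_nonneg u]) (neg_abs_le u)),
    max_le (by linarith [abs_nonneg u]) (min_le_of_right_le (le_abs_self u))⟩

theorem le_abs_clamp {m R u : ℝ} (hmR : m ≤ R) (hu : m ≤ |u|) : m ≤ |max (-R) (min R u)| := by
  rcases le_abs.1 hu with hu | hu
  · exact (le_max_of_le_right (le_min hmR hu)).trans (le_abs_self _)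
  · exact (le_neg.1 (max_le (neg_le_neg hmR)
      (min_le_of_right_le (le_neg.1 hu)))).trans (neg_le_abs _)

namespace IsSuperlinear

variable {f : ℝ → ℝ}

theorem continuous_stiffness (hf : IsSuperlinear f) : Continuous (stiffness f) := by
  refine continuous_iff_continuousAt.2 fun u => ?_
  rcases eq_or_ne u 0 with rfl | hu
  · simpa [ContinuousAt, stiffness] using hf.tendsto_stiffness_zero
  · exact hf.locallyLipschitz.continuous.continuousAt.div continuousAt_id hu

theorem stiffness_le_maxStiffness (hf : IsSuperlinear f) {u M : ℝ} (hu : |u| ≤ M) :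
    stiffness f u ≤ maxStiffness f M :=
  le_csSup (isCompact_Icc.bddAbove_image hf.continuous_stiffness.continuousOn)
    (mem_image_of_mem _ (abs_le.1 hu))

theorem tendsto_maxStiffness (hf : IsSuperlinear f) :
    Tendsto (maxStiffness f) (𝓝[>] 0) (𝓝 0) := by
  refine Metric.tendsto_nhdsWithin_nhds.2 fun ε hε => ?_
  obtain ⟨δ, hδ, hball⟩ :=
    Metric.tendsto_nhds_nhds.1 hf.tendsto_stiffness_zero (ε / 2) (half_pos hε)
  refine ⟨δ, hδ, fun M hM hMδ => ?_⟩
  have hle : maxStiffness f M ≤ ε / 2 := by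
    refine csSup_le ((nonempty_Icc.2 (neg_le_self (le_of_lt hM))).image _) ?_
    rintro _ ⟨u, hu, rfl⟩
    have := hball (x := u) ?_
    · rw [Real.dist_0_eq_abs] at this
      exact (le_abs_self _).trans this.le
    · rw [Real.dist_0_eq_abs] at hMδ ⊢
      exact (abs_le.2 hu).trans_lt ((le_abs_self M).trans_lt hMδ)
  have hge : 0 ≤ maxStiffness f M :=
    (hf.stiffness_nonneg 0).trans (hf.stiffness_le_maxStiffness (by simpa using le_of_lt hM))
  rw [Real.dist_0_eq_abs, abs_of_nonneg hge]
  linarith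

theorem exists_le_stiffness (hf : IsSuperlinear f) (P : ℝ) :
    ∃ m > 0, ∀ u, m ≤ |u| → P ≤ stiffness f u := by
  obtain ⟨m, -, hm⟩ := (hasBasis_cobounded_norm (E := ℝ)).eventually_iff.1
    (hf.tendsto_stiffness_cobounded.eventually_ge_atTop P)
  exact ⟨max m 1, by positivity, fun u hu => hm (le_of_max_le_left hu)⟩

theorem isStiffness_clamp (hf : IsSuperlinear f) {P m R : ℝ} (hR : 0 ≤ R) (hmR : m ≤ R)
    (hP : ∀ u, m ≤ |u| → P ≤ stiffness f u) (u : ℝ) :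
    IsStiffness (maxStiffness f) P m u (stiffness f (max (-R) (min R u))) where
  nonneg := hf.stiffness_nonneg _
  le _ hM := hf.stiffness_le_maxStiffness ((abs_clamp_le hR).trans hM)
  ge hm := hP _ (le_abs_clamp hmR hm)

theorem neg_comp_neg (hf : IsSuperlinear f) : IsSuperlinear fun u => -f (-u) := by
  have heq : (stiffness fun u => -f (-u)) = fun u => stiffness f (-u) :=
    funext fun u => by rw [stiffness, stiffness, neg_div, div_neg]
  refine ⟨?_, by simp [hf.map_zero], ?_, ?_, ?_⟩
  · exact (hf.locallyLipschitz.comp LipschitzWith.id.neg.locallyLipschitz).neg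
  · exact heq ▸ fun u => hf.stiffness_nonneg (-u)
  · exact heq ▸ hf.tendsto_stiffness_zero.comp (by simpa using (continuous_neg (G := ℝ)).tendsto 0)
  · exact heq ▸ hf.tendsto_stiffness_cobounded.comp tendsto_neg_cobounded

end IsSuperlinear

theorem stiffness_abs_rpow_mul {p : ℝ} (hp : 1 < p) (u : ℝ) :
    stiffness (fun u => |u| ^ (p - 1) * u) u = |u| ^ (p - 1) := by
  rcases eq_or_ne u 0 with rfl | hu
  · simp [stiffness, zero_rpow (sub_ne_zero.2 hp.ne')]
  · exact mul_div_cancel_right₀ _ hu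

theorem abs_rpow_sub_one_mul {p : ℝ} (hp : p ≠ 0) (u : ℝ) :
    |u| ^ (p - 1) * u = max u 0 ^ p - max (-u) 0 ^ p := by
  have hpow {v : ℝ} (hv : 0 ≤ v) : v ^ (p - 1) * v = v ^ p := by
    rw [← rpow_add_one' hv (by simpa using hp), sub_add_cancel]
  rcases le_total 0 u with hu | hu
  · rw [max_eq_left hu, max_eq_right (neg_nonpos.2 hu), zero_rpow hp, sub_zero, abs_of_nonneg hu,
      hpow hu]
  · rw [max_eq_right hu, max_eq_left (neg_nonneg.2 hu), zero_rpow hp, zero_sub,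
      ← hpow (neg_nonneg.2 hu), abs_of_nonpos hu, mul_neg, neg_neg]

theorem isSuperlinear_abs_rpow_mul {p : ℝ} (hp : 1 < p) :
    IsSuperlinear fun u => |u| ^ (p - 1) * u := by
  have hp0 : 0 < p - 1 := sub_pos.2 hp
  have heq := funext (stiffness_abs_rpow_mul hp)
  refine ⟨?_, by simp, ?_, ?_, ?_⟩
  · have hpow : LocallyLipschitz fun u : ℝ => u ^ p :=
      (contDiff_rpow_const_of_le (n := 1) (by exact_mod_cast hp.le)).locallyLipschitz
    rw [funext (abs_rpow_sub_one_mul (zero_lt_one.trans hp).ne')]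
    exact (hpow.comp (LipschitzWith.id.max_const 0).locallyLipschitz).sub
      (hpow.comp (LipschitzWith.id.neg.max_const 0).locallyLipschitz)
  · exact heq ▸ fun u => by positivity
  · rw [heq]
    have : Continuous fun u : ℝ => |u| ^ (p - 1) := continuous_abs.rpow_const fun _ => .inr hp0.le
    simpa [zero_rpow hp0.ne'] using this.tendsto 0
  · rw [heq]
    exact (tendsto_rpow_atTop hp0).comp tendsto_norm_cobounded_atTop

/-! ### Normal form of the radial equation -/

theorem exists_slope_eq {φ : ℝ → ℝ} {κ κ' : ℝ}
    (h : ∀ x s, 0 ≤ s → κ * s ≤ φ (x + s) - φ x ∧ φ (x + s) - φ x ≤ κ' * s) (x y : ℝ) :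
    ∃ A ∈ Icc κ κ', φ x - φ y = A * (x - y) := by
  wlog hxy : y ≤ x generalizing x y
  · obtain ⟨A, hA, hφ⟩ := this y x (le_of_not_ge hxy)
    exact ⟨A, hA, by linarith⟩
  rcases hxy.eq_or_lt with rfl | hlt
  · have h1 := h y 1 zero_le_one
    exact ⟨κ, ⟨le_rfl, by linarith⟩, by ring⟩
  have hpos : 0 < x - y := sub_pos.2 hlt
  have hslope := h y (x - y) hpos.le
  rw [add_sub_cancel] at hslope
  exact ⟨(φ x - φ y) / (x - y), ⟨(le_div_iff₀ hpos).2 hslope.1, (div_le_iff₀ hpos).2 hslope.2⟩,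
    (div_mul_cancel₀ _ hpos.ne').symm⟩

theorem IsStiffness.div {ψ : ℝ → ℝ} {P m u σ A lam Lam : ℝ} (h : IsStiffness ψ P m u σ)
    (hlam : 0 < lam) (hA : A ∈ Icc lam Lam) :
    IsStiffness (fun M => ψ M / lam) (P / Lam) m u (σ / A) where
  nonneg := div_nonneg h.nonneg (hlam.le.trans hA.1)
  le M hM := div_le_div₀ (h.nonneg.trans (h.le M hM)) (h.le M hM) hlam hA.1
  ge hm := (div_le_div_of_nonneg_right (h.ge hm) (hlam.le.trans (hA.1.trans hA.2))).trans
    (div_le_div_of_nonneg_left h.nonneg (hlam.trans_le hA.1) hA.2)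

/-- The second derivative `m` solving `F(r, m, l) = c`, for given `l = u' / r`. -/
noncomputable def radialHessian (F : ℝ → ℝ → ℝ → ℝ) (r l c : ℝ) : ℝ :=
  Function.invFun (fun m => F r m l) c

/-- The right-hand side `u'' = H(r, u, u')` of the equation `-F(r, u'', u' / r) = g(u)`, extended
to `r < a` so as to keep `r` away from `0`. -/
noncomputable def radialAccel (F : ℝ → ℝ → ℝ → ℝ) (g : ℝ → ℝ) (a r : ℝ) (z : ℝ × ℝ) : ℝ :=
  radialHessian F (max a r) (z.2 / max a r) (-g z.1)

namespace UnifElliptic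

variable {n : ℕ} {lam Lam : ℝ} {F : ℝ → ℝ → ℝ → ℝ}

theorem le (hF : UnifElliptic n lam Lam F) : lam ≤ Lam := by
  have h := hF 1 one_pos 0 0 1 0 zero_le_one le_rfl
  simp only [mul_zero, add_zero, mul_one] at h
  exact h.1.trans h.2

theorem exists_coeffs (hF : UnifElliptic n lam Lam F) {r : ℝ} (hr : 0 < r) (m l m' l' : ℝ) :
    ∃ A ∈ Icc lam Lam, ∃ B ∈ Icc (lam * (n - 1)) (Lam * (n - 1)),
      F r m l - F r m' l' = A * (m - m') + B * (l - l') := by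
  obtain ⟨A, hA, hm⟩ := exists_slope_eq (φ := fun m => F r m l)
    (fun x s hs => by simpa using hF r hr x l s 0 hs le_rfl) m m'
  obtain ⟨B, hB, hl⟩ := exists_slope_eq (φ := fun l => F r m' l) (κ := lam * (n - 1))
    (κ' := Lam * (n - 1))
    (fun x s hs => by simpa [mul_assoc] using hF r hr m' x 0 s le_rfl hs) l l'
  exact ⟨A, hA, B, hB, by linarith⟩

theorem neg_comp_neg (hF : UnifElliptic n lam Lam F) :
    UnifElliptic n lam Lam fun r m l => -F r (-m) (-l) := by
  intro r hr m l s t hs ht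
  have h := hF r hr (-(m + s)) (-(l + t)) s t hs ht
  rw [show -(m + s) + s = -m by ring, show -(l + t) + t = -l by ring] at h
  exact ⟨by linarith [h.1], by linarith [h.2]⟩

theorem apply_radialHessian (hF : UnifElliptic n lam Lam F) (hlam : 0 < lam) {r : ℝ} (hr : 0 < r)
    (l c : ℝ) : F r (radialHessian F r l c) l = c := by
  have hcont : Continuous fun m => F r m l := by
    refine (LipschitzWith.of_dist_le' (K := Lam) fun m m' => ?_).continuous
    obtain ⟨A, hA, B, -, h⟩ := hF.exists_coeffs hr m l m' l
    rw [sub_self, mul_zero, add_zero] at h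
    rw [Real.dist_eq, Real.dist_eq, h, abs_mul, abs_of_pos (hlam.trans_le hA.1)]
    exact mul_le_mul_of_nonneg_right hA.2 (abs_nonneg _)
  have hgrowth (m s : ℝ) (hs : 0 ≤ s) : lam * s ≤ F r (m + s) l - F r m l := by
    simpa using (hF r hr m l s 0 hs le_rfl).1
  have htop : Tendsto (fun m => F r m l) atTop atTop := by
    refine tendsto_atTop_mono' _ ?_
      (tendsto_atTop_add_const_left _ (F r 0 l) (tendsto_id.const_mul_atTop hlam))
    filter_upwards [eventually_ge_atTop 0] with m hm
    have := hgrowth 0 m hm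
    simp only [zero_add, id] at this ⊢
    linarith
  have hbot : Tendsto (fun m => F r m l) atBot atBot := by
    refine tendsto_atBot_mono' _ ?_
      (tendsto_atBot_add_const_left _ (F r 0 l) (tendsto_id.const_mul_atBot hlam))
    filter_upwards [eventually_le_atBot 0] with m hm
    have := hgrowth m (-m) (neg_nonneg.2 hm)
    simp only [add_neg_cancel, id] at this ⊢
    linarith
  exact Function.invFun_eq (f := fun m => F r m l) (hcont.surjective htop hbot c)

theorem apply_radialAccel (hF : UnifElliptic n lam Lam F) (hlam : 0 < lam) {a : ℝ} (ha : 0 < a)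
    (g : ℝ → ℝ) (r : ℝ) (z : ℝ × ℝ) :
    F (max a r) (radialAccel F g a r z) (z.2 / max a r) = -g z.1 :=
  hF.apply_radialHessian hlam (lt_max_of_lt_left ha) _ _

theorem mul_abs_sub_le (hF : UnifElliptic n lam Lam F) (hn : 1 ≤ n) (hlam : 0 < lam) {r : ℝ}
    (hr : 0 < r) (m l m' l' : ℝ) :
    lam * |m - m'| ≤ |F r m l - F r m' l'| + Lam * (n - 1) * |l - l'| := by
  have hn' : (0 : ℝ) ≤ n - 1 := sub_nonneg.2 (by exact_mod_cast hn)
  obtain ⟨A, hA, B, hB, h⟩ := hF.exists_coeffs hr m l m' l'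
  calc lam * |m - m'| ≤ A * |m - m'| := mul_le_mul_of_nonneg_right hA.1 (abs_nonneg _)
    _ = |(F r m l - F r m' l') - B * (l - l')| := by
        rw [h, add_sub_cancel_right, abs_mul, abs_of_pos (hlam.trans_le hA.1)]
    _ ≤ |F r m l - F r m' l'| + |B * (l - l')| := abs_sub _ _
    _ ≤ |F r m l - F r m' l'| + Lam * (n - 1) * |l - l'| := by
        rw [abs_mul, abs_of_nonneg ((mul_nonneg hlam.le hn').trans hB.1)]
        gcongr
        exact hB.2

theorem exists_lipschitzWith_radialAccel (hF : UnifElliptic n lam Lam F) (hn : 1 ≤ n)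
    (hlam : 0 < lam) {a : ℝ} (ha : 0 < a) {g : ℝ → ℝ} {K : NNReal} (hg : LipschitzWith K g) :
    ∃ K', ∀ r, LipschitzWith K' (radialAccel F g a r) := by
  refine ⟨_, fun r => LipschitzWith.of_dist_le' (K := (K + Lam * (n - 1) / a) / lam)
    fun z z' => ?_⟩
  have hLam : 0 ≤ Lam * (n - 1) :=
    mul_nonneg (hlam.le.trans hF.le) (sub_nonneg.2 (by exact_mod_cast hn))
  have hr : 0 < max a r := lt_max_of_lt_left ha
  have h := hF.mul_abs_sub_le hn hlam hr (radialAccel F g a r z) (z.2 / max a r)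
    (radialAccel F g a r z') (z'.2 / max a r)
  rw [hF.apply_radialAccel hlam ha, hF.apply_radialAccel hlam ha] at h
  have hforce : |-g z.1 - -g z'.1| ≤ K * ‖z - z'‖ := by
    rw [neg_sub_neg, abs_sub_comm]
    exact (hg.norm_sub_le _ _).trans (by gcongr; exact norm_fst_le (z - z'))
  have hdamp : |z.2 / max a r - z'.2 / max a r| ≤ ‖z - z'‖ / a := by
    rw [← sub_div, abs_div, abs_of_pos hr]
    exact div_le_div₀ (norm_nonneg _) (norm_snd_le (z - z')) ha (le_max_left _ _)
  rw [Real.dist_eq, dist_eq_norm, div_mul_eq_mul_div, le_div_iff₀ hlam, mul_comm]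
  calc _ ≤ K * ‖z - z'‖ + Lam * (n - 1) * (‖z - z'‖ / a) :=
        h.trans (add_le_add hforce (mul_le_mul_of_nonneg_left hdamp hLam))
    _ = _ := by ring

theorem continuous_radialAccel (hF : UnifElliptic n lam Lam F) (hn : 1 ≤ n) (hlam : 0 < lam)
    (hFc : ∀ m l, ContinuousOn (fun r => F r m l) (Ioi 0)) {a : ℝ} (ha : 0 < a) (g : ℝ → ℝ)
    (z : ℝ × ℝ) : Continuous fun r => radialAccel F g a r z := by
  refine continuous_iff_continuousAt.2 fun r₀ => tendsto_iff_dist_tendsto_zero.2 ?_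
  set m₀ := radialAccel F g a r₀ z with hm₀
  set l₀ := z.2 / max a r₀ with hl₀
  have hpos (r : ℝ) : 0 < max a r := lt_max_of_lt_left ha
  have hmax : Continuous fun r => max a r := by fun_prop
  have hF₀ : Continuous fun r => F (max a r) m₀ l₀ := (hFc m₀ l₀).comp_continuous hmax hpos
  have hbound : Continuous fun r => (|-g z.1 - F (max a r) m₀ l₀| +
      Lam * (n - 1) * |z.2 / max a r - l₀|) / lam :=
    (((continuous_const.sub hF₀).abs).add (continuous_const.mul
      ((continuous_const.div hmax fun r => (hpos r).ne').sub continuous_const).abs)).div_const _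
  have hlim := hbound.tendsto r₀
  rw [hm₀, hl₀, hF.apply_radialAccel hlam ha, sub_self, sub_self, abs_zero, mul_zero, add_zero,
    zero_div] at hlim
  refine squeeze_zero (fun _ => dist_nonneg) (fun r => ?_) hlim
  rw [le_div_iff₀ hlam, mul_comm, Real.dist_eq, ← hF.apply_radialAccel hlam ha g r z]
  exact hF.mul_abs_sub_le hn hlam (hpos r) _ _ _ _

theorem isDampedOscillator_radialAccel (hF : UnifElliptic n lam Lam F) (hn : 1 ≤ n)
    (hlam : 0 < lam) (hF0 : ∀ r, 0 < r → F r 0 0 = 0) {a : ℝ} (ha : 0 < a) {g ψ : ℝ → ℝ}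
    {P m : ℝ} (hg : ∀ u, ∃ σ, IsStiffness ψ P m u σ ∧ g u = σ * u) :
    IsDampedOscillator (Lam * (n - 1) / (lam * a)) (fun M => ψ M / lam) (P / Lam) m
      (radialAccel F g a) := by
  intro r z
  have hn' : (0 : ℝ) ≤ n - 1 := sub_nonneg.2 (by exact_mod_cast hn)
  have hr : 0 < max a r := lt_max_of_lt_left ha
  obtain ⟨σ, hσ, hgσ⟩ := hg z.1
  obtain ⟨A, hA, B, hB, h⟩ :=
    hF.exists_coeffs hr (radialAccel F g a r z) (z.2 / max a r) 0 0
  rw [hF.apply_radialAccel hlam ha, hF0 _ hr, sub_zero, sub_zero, sub_zero, hgσ] at h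
  have hA0 : 0 < A := hlam.trans_le hA.1
  have hB0 : 0 ≤ B := (mul_nonneg hlam.le hn').trans hB.1
  refine ⟨B / (A * max a r), ⟨by positivity, ?_⟩, σ / A, hσ.div hlam hA, ?_⟩
  · exact div_le_div₀ (hB0.trans hB.2) hB.2 (by positivity)
      (mul_le_mul hA.1 (le_max_left _ _) ha.le hA0.le)
  · rw [← mul_left_cancel_iff_of_pos hA0]
    field_simp at h ⊢
    linarith

end UnifElliptic

/-! ### Radial solutions with prescribed nodal regions -/

/-- The equation `-F(r, u'', u' / r) = f(u)` has a classical solution on `[a, b]` that vanishes at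
`a = r₀ < ⋯ < r_k = b` and has the sign `(-1) ^ (j + i)` on `(r_j, r_{j + 1})`. -/
def HasNodalSolution (F : ℝ → ℝ → ℝ → ℝ) (f : ℝ → ℝ) (a b : ℝ) (k i : ℕ) : Prop :=
  ∃ (u u' u'' : ℝ → ℝ) (rr : ℕ → ℝ),
    rr 0 = a ∧ rr k = b ∧ (∀ j < k, rr j < rr (j + 1)) ∧
    (∀ r ∈ Icc a b, HasDerivAt u (u' r) r) ∧
    (∀ r ∈ Icc a b, HasDerivAt u' (u'' r) r) ∧
    ContinuousOn u'' (Icc a b) ∧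
    u a = 0 ∧ u b = 0 ∧
    (∀ r ∈ Ioo a b, -F r (u'' r) (u' r / r) = f (u r)) ∧
    (∀ j ≤ k, u (rr j) = 0) ∧
    (∀ j < k, ∀ x ∈ Ioo (rr j) (rr (j + 1)), 0 < (-1 : ℝ) ^ (j + i) * u x)

theorem HasNodalSolution.of_neg_comp_neg {F : ℝ → ℝ → ℝ → ℝ} {f : ℝ → ℝ} {a b : ℝ} {k i : ℕ}
    (h : HasNodalSolution (fun r m l => -F r (-m) (-l)) (fun u => -f (-u)) a b k i) :
    HasNodalSolution F f a b k (i + 1) := by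
  obtain ⟨u, u', u'', rr, h0, hk, hlt, hu, hu', hu'', hua, hub, hode, hzero, hsign⟩ := h
  refine ⟨-u, -u', -u'', rr, h0, hk, hlt, fun r hr => (hu r hr).neg, fun r hr => (hu' r hr).neg,
    hu''.neg, by simp [hua], by simp [hub], fun r hr => ?_, fun j hj => by simp [hzero j hj],
    fun j hj x hx => ?_⟩
  · have := hode r hr
    simp only [Pi.neg_apply, neg_div, neg_neg] at this ⊢
    linarith
  · have := hsign j hj x hx
    rw [← add_assoc, pow_succ]
    simpa using this

theorem UnifElliptic.hasNodalSolution {n : ℕ} (hn : 1 ≤ n) {lam Lam : ℝ} (hlam : 0 < lam)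
    {F : ℝ → ℝ → ℝ → ℝ} (hFc : ∀ m l, ContinuousOn (fun r => F r m l) (Ioi 0))
    (hF0 : ∀ r, 0 < r → F r 0 0 = 0) (hF : UnifElliptic n lam Lam F) {f : ℝ → ℝ}
    (hf : IsSuperlinear f) {a b : ℝ} (ha : 0 < a) (hab : a < b) {k : ℕ} (hk : 1 ≤ k) :
    HasNodalSolution F f a b k 0 := by
  have hLam : 0 < Lam := hlam.trans_le hF.le
  set C := Lam * (n - 1) / (lam * a)
  set P := Lam * ((C ^ 2 + (6 * π * k / (b - a)) ^ 2) / 2) with hP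
  obtain ⟨m, hm, hmP⟩ := hf.exists_le_stiffness P
  obtain ⟨D, hD⟩ := exists_nodal_solution (C := C) (P := P / Lam) (m := m)
    (ψ := fun M => maxStiffness f M / lam) hab hk hm
    (by simpa using hf.tendsto_maxStiffness.div_const lam)
    (by rw [hP, mul_div_cancel_left₀ _ hLam.ne']; linarith)
  have hR : 0 ≤ max m D := hm.le.trans (le_max_left m D)
  set g := linearExtension f (max m D)
  obtain ⟨Kg, hg⟩ := exists_lipschitzWith_linearExtension hf.locallyLipschitz hf.map_zero hR
  obtain ⟨K, hLip⟩ := hF.exists_lipschitzWith_radialAccel hn hlam ha hg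
  have hcont := hF.continuous_radialAccel hn hlam hFc ha g
  obtain ⟨u, v, rr, hrr, hsol⟩ := hD (radialAccel F g a) K hLip hcont
    (hF.isDampedOscillator_radialAccel hn hlam hF0 ha fun u =>
      ⟨_, hf.isStiffness_clamp hR (le_max_left m D) hmP u, rfl⟩)
  have hu : ContinuousOn u (Icc a b) := fun x hx => (hsol x hx).1.continuousAt.continuousWithinAt
  have hv : ContinuousOn v (Icc a b) := fun x hx => (hsol x hx).2.1.continuousAt.continuousWithinAt
  have hjoint : Continuous fun q : ℝ × ℝ × ℝ => radialAccel F g a q.1 q.2 :=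
    continuous_prod_of_continuous_lipschitzWith' _ K hLip hcont
  refine ⟨u, v, fun x => radialAccel F g a x (u x, v x), rr, hrr.left, hrr.right, hrr.lt,
    fun x hx => (hsol x hx).1, fun x hx => (hsol x hx).2.1,
    hjoint.comp_continuousOn (continuousOn_id.prodMk (hu.prodMk hv)), ?_, ?_, fun r hr => ?_,
    hrr.zero, hrr.sign⟩
  · exact hrr.left ▸ hrr.zero 0 k.zero_le
  · exact hrr.right ▸ hrr.zero k le_rfl
  · have h := hF.apply_radialAccel hlam ha g r (u r, v r)
    rw [max_eq_right hr.1.le] at h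
    rw [h, neg_neg]
    exact linearExtension_of_abs_le hf.map_zero
      ((hsol r (Ioo_subset_Icc_self hr)).2.2.trans (le_max_right _ _))

theorem sign_changing_radial_solutions_in_annulus_general {n : ℕ} (hn : 1 ≤ n) {lam Lam : ℝ}
    (hlam : 0 < lam) {F : ℝ → ℝ → ℝ → ℝ}
    (hFc : ∀ m l, ContinuousOn (fun r => F r m l) (Ioi 0)) (hF0 : ∀ r, 0 < r → F r 0 0 = 0)
    (hF : UnifElliptic n lam Lam F) {f : ℝ → ℝ} (hf : IsSuperlinear f) {a b : ℝ} (ha : 0 < a)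
    (hab : a < b) {k : ℕ} (hk : 1 ≤ k) :
    HasNodalSolution F f a b k 0 ∧ HasNodalSolution F f a b k 1 :=
  ⟨hF.hasNodalSolution hn hlam hFc hF0 hf ha hab hk,
    (hF.neg_comp_neg.hasNodalSolution hn hlam (fun m l => (hFc (-m) (-l)).neg)
      (fun r hr => by simp [hF0 r hr]) hf.neg_comp_neg ha hab hk).of_neg_comp_neg⟩

/-- Theorem 2 (paper): for every `k ≥ 1` there exist radial solutions of
`−F(x,D²u) = |u|^{p−1}u` in the annulus `A_{a,b}` with exactly `k` nodal regions,
with both possible sign patterns. -/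
theorem sign_changing_radial_solutions_in_annulus
    (n : ℕ) (hn : 2 ≤ n) (lam Lam p : ℝ) (hlam : 0 < lam) (hlL : lam ≤ Lam) (hp : 1 < p)
    (F : ℝ → ℝ → ℝ → ℝ)
    (hFcont : Continuous fun x : ℝ × ℝ × ℝ => F x.1 x.2.1 x.2.2)
    (hF0 : ∀ r : ℝ, F r 0 0 = 0)
    (hFell : UnifElliptic n lam Lam F)
    (a b : ℝ) (ha : 0 < a) (hab : a < b) (k : ℕ) (hk : 1 ≤ k) :
    (∃ (u u' u'' : ℝ → ℝ) (rr : ℕ → ℝ),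
      rr 0 = a ∧ rr k = b ∧ (∀ j < k, rr j < rr (j + 1)) ∧
      (∀ r ∈ Icc a b, HasDerivAt u (u' r) r) ∧
      (∀ r ∈ Icc a b, HasDerivAt u' (u'' r) r) ∧
      ContinuousOn u'' (Icc a b) ∧
      u a = 0 ∧ u b = 0 ∧
      (∀ r ∈ Ioo a b, -F r (u'' r) (u' r / r) = |u r| ^ (p - 1) * u r) ∧
      (∀ j ≤ k, u (rr j) = 0) ∧
      (∀ j < k, ∀ x ∈ Ioo (rr j) (rr (j + 1)), 0 < (-1 : ℝ) ^ j * u x)) ∧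
    (∃ (u u' u'' : ℝ → ℝ) (rr : ℕ → ℝ),
      rr 0 = a ∧ rr k = b ∧ (∀ j < k, rr j < rr (j + 1)) ∧
      (∀ r ∈ Icc a b, HasDerivAt u (u' r) r) ∧
      (∀ r ∈ Icc a b, HasDerivAt u' (u'' r) r) ∧
      ContinuousOn u'' (Icc a b) ∧
      u a = 0 ∧ u b = 0 ∧
      (∀ r ∈ Ioo a b, -F r (u'' r) (u' r / r) = |u r| ^ (p - 1) * u r) ∧
      (∀ j ≤ k, u (rr j) = 0) ∧
      (∀ j < k, ∀ x ∈ Ioo (rr j) (rr (j + 1)), 0 < (-1 : ℝ) ^ (j + 1) * u x)) :=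
  sign_changing_radial_solutions_in_annulus_general (by lia) hlam (fun m l =>
    (hFcont.comp (by fun_prop : Continuous fun r : ℝ => (r, m, l))).continuousOn)
    (fun r _ => hF0 r) hFell (isSuperlinear_abs_rpow_mul hp) ha hab hk
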